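/- arXiv:1007.2664 — 2 statements merged into one kernel-verified Lean document; each statement's English description precedes it below -/
import Mathlib

section
/- Let 0 < β_L ≤ β_R, T_L = 1/β_L, T_R = 1/β_R, and κ = (√(πβ_L/2) + √(πβ_R/2))^{−1}. For λ ∈ (0, β_L) let f(λ) be the unique η > 0 with F(λ, η) = 1, and for λ ∈ (−β_R, β_L−β_R) define f(λ) likewise. Then the derivative f' is a bijection from (0, β_L) onto (κ(T_L − T_R), +∞), and f' is a bijection from (−β_R, β_L − β_R) onto (−∞, −κ(T_L − T_R)). -/
open MeasureTheory Filter

/-- `C(x,η) = ∫₀^∞ v e^{−η/v − x v²/2} dv`. -/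
noncomputable def Ccal (x η : ℝ) : ℝ :=
  ∫ v in Set.Ioi (0 : ℝ), v * Real.exp (-η / v - x * v ^ 2 / 2)

/-- `F(λ,η) = β_L β_R C(β_R+λ, η) C(β_L−λ, η)`. -/
noncomputable def Fcal (βL βR lam η : ℝ) : ℝ :=
  βL * βR * Ccal (βR + lam) η * Ccal (βL - lam) η

/-- The integrand. -/
lemma cint {x η : ℝ} (hx : 0 < x) (hη : 0 ≤ η) :
    IntegrableOn (fun v : ℝ => v * Real.exp (-η / v - x * v ^ 2 / 2)) (Set.Ioi 0) := by
  have h := (integrable_mul_exp_neg_mul_sq (b := x / 2) (by positivity)).integrableOn (s := Set.Ioi 0)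
  refine Integrable.mono' h ?_ ?_
  · exact (by fun_prop : Measurable (fun v : ℝ => v * Real.exp (-η / v - x * v ^ 2 / 2))).aestronglyMeasurable
  · refine (ae_restrict_iff' measurableSet_Ioi).2 (Eventually.of_forall fun v hv => ?_)
    have hv : 0 < v := hv
    rw [Real.norm_of_nonneg (by positivity)]
    gcongr
    have : 0 ≤ η / v := by positivity
    have e : -η / v = -(η / v) := by ring
    rw [e]; linarith

lemma ccont (x η : ℝ) : ContinuousOn (fun v : ℝ => -η / v - x * v ^ 2 / 2) (Set.Ioi 0) := by
  refine ContinuousOn.sub (ContinuousOn.div continuousOn_const continuousOn_id ?_) (by fun_prop)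
  intro v hv; exact ne_of_gt hv

lemma int_pos_of {u : ℝ → ℝ} (hc : ContinuousOn u (Set.Ioi 0)) (hn : ∀ v, 0 < v → 0 ≤ u v)
    (hi : IntegrableOn u (Set.Ioi 0)) {w : ℝ} (hw : 0 < w) (hu : u w ≠ 0) :
    0 < ∫ v in Set.Ioi (0 : ℝ), u v := by
  rw [setIntegral_pos_iff_support_of_nonneg_ae ((ae_restrict_iff' measurableSet_Ioi).2
    (Eventually.of_forall fun v hv => hn v hv)) hi]
  have ho : IsOpen (Set.Ioi 0 ∩ u ⁻¹' {0}ᶜ) :=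
    hc.isOpen_inter_preimage isOpen_Ioi isOpen_compl_singleton
  have := ho.measure_pos volume ⟨w, hw, hu⟩
  refine this.trans_le (measure_mono ?_)
  intro v hv
  exact ⟨hv.2, hv.1⟩

lemma cpos {x η : ℝ} (hx : 0 < x) (hη : 0 ≤ η) : 0 < Ccal x η := by
  refine int_pos_of (w := 1) (continuousOn_id.mul (ccont x η).rexp) ?_ (cint hx hη) one_pos ?_
  · intro v hv; positivity
  · positivity

lemma canti {x η η' : ℝ} (hx : 0 < x) (hη : 0 ≤ η) (h : η ≤ η') : Ccal x η' ≤ Ccal x η := by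
  refine setIntegral_mono_on (cint hx (hη.trans h)) (cint hx hη) measurableSet_Ioi ?_
  intro v hv
  have hv : 0 < v := hv
  gcongr

lemma clog {x1 x2 η1 η2 a b : ℝ} (h1 : 0 < x1) (h2 : 0 < x2) (hne : x1 ≠ x2) (he1 : 0 ≤ η1)
    (he2 : 0 ≤ η2) (ha : 0 < a) (hb : 0 < b) (hab : a + b = 1) :
    Real.log (Ccal (a * x1 + b * x2) (a * η1 + b * η2)) <
      a * Real.log (Ccal x1 η1) + b * Real.log (Ccal x2 η2) := by
  have hc1 := cpos h1 he1
  have hc2 := cpos h2 he2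
  have hx : 0 < a * x1 + b * x2 := by positivity
  have hη : 0 ≤ a * η1 + b * η2 := by positivity
  have hc := cpos hx hη
  set l1 := Real.log (Ccal x1 η1) with hl1
  set l2 := Real.log (Ccal x2 η2) with hl2
  let L1 : ℝ → ℝ := fun v => -η1 / v - x1 * v ^ 2 / 2
  let L2 : ℝ → ℝ := fun v => -η2 / v - x2 * v ^ 2 / 2
  let u : ℝ → ℝ := fun v => a * Real.exp (-l1) * (v * Real.exp (L1 v))
    + b * Real.exp (-l2) * (v * Real.exp (L2 v))
    - Real.exp (-(a * l1 + b * l2)) *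
      (v * Real.exp (-(a * η1 + b * η2) / v - (a * x1 + b * x2) * v ^ 2 / 2))
  have hu : ∀ v, u v = v * (a * Real.exp (L1 v - l1) + b * Real.exp (L2 v - l2)
      - Real.exp (a * (L1 v - l1) + b * (L2 v - l2))) := by
    intro v
    have e : a * (L1 v - l1) + b * (L2 v - l2) = -(a * l1 + b * l2) +
        (-(a * η1 + b * η2) / v - (a * x1 + b * x2) * v ^ 2 / 2) := by
      simp only [L1, L2]; ring
    rw [e, Real.exp_add, sub_eq_add_neg (L1 v), sub_eq_add_neg (L2 v), Real.exp_add, Real.exp_add]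
    simp only [u]; ring
  have hi1 := (cint h1 he1).const_mul (a * Real.exp (-l1))
  have hi2 := (cint h2 he2).const_mul (b * Real.exp (-l2))
  have hi3 := (cint hx hη).const_mul (Real.exp (-(a * l1 + b * l2)))
  have hI : ∫ v in Set.Ioi (0 : ℝ), u v = 1 - Real.exp (-(a * l1 + b * l2)) *
      Ccal (a * x1 + b * x2) (a * η1 + b * η2) := by
    simp only [u]
    have e1 := integral_sub (hi1.add hi2) hi3
    simp only [Pi.add_apply] at e1
    have e2 := integral_add hi1 hi2
    simp only [L1, L2]
    rw [e1, e2, integral_const_mul,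
      integral_const_mul, integral_const_mul]
    change a * Real.exp (-l1) * Ccal x1 η1 + b * Real.exp (-l2) * Ccal x2 η2 - _ * Ccal _ _ = _
    rw [Real.exp_neg, Real.exp_neg, hl1, hl2, Real.exp_log hc1, Real.exp_log hc2]
    have : a * (Ccal x1 η1)⁻¹ * Ccal x1 η1 + b * (Ccal x2 η2)⁻¹ * Ccal x2 η2 = 1 := by
      field_simp; exact hab
    rw [this]
  have hpos : 0 < ∫ v in Set.Ioi (0 : ℝ), u v := by
    have hw : ∃ w : ℝ, 0 < w ∧ L1 w - l1 ≠ L2 w - l2 := by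
      by_contra! hcon
      have e1 := hcon 1 (by norm_num)
      have e2 := hcon 2 (by norm_num)
      have e4 := hcon 4 (by norm_num)
      simp only [L1, L2] at e1 e2 e4
      apply hne
      linarith
    obtain ⟨w, hw, hne'⟩ := hw
    refine int_pos_of (w := w) ?_ ?_ ((hi1.add hi2).sub hi3) hw ?_
    · refine ContinuousOn.sub (ContinuousOn.add ?_ ?_) ?_
      · exact continuousOn_const.mul (continuousOn_id.mul (ccont _ _).rexp)
      · exact continuousOn_const.mul (continuousOn_id.mul (ccont _ _).rexp)
      · exact continuousOn_const.mul (continuousOn_id.mul (ccont _ _).rexp)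
    · intro v hv
      rw [hu]
      have := convexOn_exp.2 (Set.mem_univ (L1 v - l1)) (Set.mem_univ (L2 v - l2)) ha.le hb.le hab
      simp only [smul_eq_mul] at this
      exact mul_nonneg hv.le (by linarith)
    · rw [hu]
      have := strictConvexOn_exp.2 (Set.mem_univ (L1 w - l1)) (Set.mem_univ (L2 w - l2)) hne' ha hb hab
      simp only [smul_eq_mul] at this
      exact (mul_pos hw (by linarith)).ne'
  rw [hI, Real.exp_neg] at hpos
  rw [Real.log_lt_iff_lt_exp hc]
  have hE := Real.exp_pos (a * l1 + b * l2)
  rw [sub_pos, inv_mul_lt_iff₀ hE, mul_one] at hpos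
  exact hpos

lemma cscale {x η : ℝ} (hx : 0 < x) : Ccal x η = Ccal 1 (η * √x) / x := by
  have hs : 0 < √x := Real.sqrt_pos.2 hx
  have h := integral_comp_mul_left_Ioi
    (fun v : ℝ => v * Real.exp (-(η * √x) / v - 1 * v ^ 2 / 2)) 0 hs
  rw [mul_zero] at h
  have hh : Ccal 1 (η * √x) = √x * ∫ v in Set.Ioi (0 : ℝ), √x * v *
      Real.exp (-(η * √x) / (√x * v) - 1 * (√x * v) ^ 2 / 2) := by
    rw [h, smul_eq_mul, mul_inv_cancel_left₀ hs.ne']; rfl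
  rw [hh, ← integral_const_mul, eq_div_iff hx.ne', Ccal, mul_comm _ x, ← integral_const_mul]
  refine setIntegral_congr_fun measurableSet_Ioi ?_
  intro v hv
  have hv : 0 < v := hv
  have e : -(η * √x) / (√x * v) = -η / v := by field_simp
  have e2 : (√x * v) ^ 2 = x * v ^ 2 := by rw [mul_pow, Real.sq_sqrt hx.le]
  simp only [e, e2]
  rw [← mul_assoc, ← mul_assoc, ← mul_assoc, Real.mul_self_sqrt hx.le, one_mul]

lemma cone : Ccal 1 0 = 1 := by
  have h := integral_mul_cexp_neg_mul_sq (b := 1 / 2) (by norm_num)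
  have : ((Ccal 1 0 : ℝ) : ℂ) = 1 := by
    rw [Ccal, ← integral_complex_ofReal]
    convert h using 1
    · refine setIntegral_congr_fun measurableSet_Ioi ?_
      intro v hv
      push_cast
      congr 2
      simp; ring
    · norm_num
  exact_mod_cast this

lemma phideriv : HasDerivWithinAt (fun y => Ccal 1 y) (-√(Real.pi / 2)) (Set.Ici 0) 0 := by
  rw [hasDerivWithinAt_iff_tendsto_slope]
  have hset : Set.Ici (0 : ℝ) \ {0} = Set.Ioi 0 := by ext v; simp [lt_iff_le_and_ne, eq_comm]
  rw [hset]
  have hg := integral_gaussian_Ioi (1 / 2)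
  have hlim : ∫ v in Set.Ioi (0 : ℝ), -Real.exp (-(1 / 2) * v ^ 2) = -√(Real.pi / 2) := by
    rw [integral_neg, hg]
    congr 1
    rw [show Real.pi / (1 / 2) = 2 ^ 2 * (Real.pi / 2) by ring, Real.sqrt_mul (by norm_num),
      Real.sqrt_sq (by norm_num)]
    ring
  rw [← hlim]
  have hT : Tendsto (fun y : ℝ => ∫ v in Set.Ioi (0 : ℝ), v * (Real.exp (-y / v) - 1) / y *
      Real.exp (-(1 / 2) * v ^ 2)) (nhdsWithin 0 (Set.Ioi 0))
      (nhds (∫ v in Set.Ioi (0 : ℝ), -Real.exp (-(1 / 2) * v ^ 2))) := by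
    refine tendsto_integral_filter_of_dominated_convergence
      (fun v => Real.exp (-(1 / 2) * v ^ 2)) ?_ ?_ ?_ ?_
    · refine Eventually.of_forall fun y => Measurable.aestronglyMeasurable (by fun_prop)
    · filter_upwards [self_mem_nhdsWithin] with y hy
      have hy : 0 < y := hy
      refine (ae_restrict_iff' measurableSet_Ioi).2 (Eventually.of_forall fun v hv => ?_)
      have hv : 0 < v := hv
      rw [norm_mul, Real.norm_of_nonneg (Real.exp_pos _).le]
      refine mul_le_of_le_one_left (Real.exp_pos _).le ?_
      have h1 : Real.exp (-y / v) ≤ 1 := by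
        rw [Real.exp_le_one_iff, neg_div]
        have : 0 < y / v := by positivity
        linarith
      have h2 : 1 - y / v ≤ Real.exp (-y / v) := by
        have := Real.add_one_le_exp (-y / v)
        rw [neg_div] at this ⊢; linarith
      rw [Real.norm_eq_abs, abs_le]
      constructor
      · rw [le_div_iff₀ hy]
        have : v * (y / v) = y := by field_simp
        nlinarith
      · rw [div_le_iff₀ hy]; nlinarith
    · exact (integrable_exp_neg_mul_sq (by norm_num)).integrableOn
    · refine (ae_restrict_iff' measurableSet_Ioi).2 (Eventually.of_forall fun v hv => ?_)
      have hv : 0 < v := hv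
      have hd : HasDerivAt (fun y : ℝ => v * Real.exp (-y / v)) (-1) 0 := by
        have := (((hasDerivAt_id (0 : ℝ)).neg.div_const v).exp).const_mul v
        refine this.congr_deriv ?_
        simp
        field_simp
      have := (hasDerivWithinAt_iff_tendsto_slope' (s := Set.Ioi 0) (by simp)).1 hd.hasDerivWithinAt
      have := this.mul_const (Real.exp (-(1 / 2) * v ^ 2))
      rw [neg_one_mul] at this
      refine this.congr fun y => ?_
      simp [slope_def_field]; ring
  refine hT.congr' ?_
  filter_upwards [self_mem_nhdsWithin] with y hy
  have hy : 0 < y := hy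
  rw [slope_def_field, Ccal, Ccal, ← integral_sub (cint one_pos hy.le) (cint one_pos le_rfl),
    ← integral_div]
  refine setIntegral_congr_fun measurableSet_Ioi ?_
  intro v hv
  simp only
  rw [sub_eq_add_neg (-y / v), sub_eq_add_neg (-0 / v), Real.exp_add, Real.exp_add]
  have : -(1 * v ^ 2 / 2) = -(1 / 2) * v ^ 2 := by ring
  rw [this]; simp; ring

lemma clogderiv {x σ s : ℝ} (hx : 0 < x) (hs : 0 ≤ s) :
    HasDerivWithinAt (fun t => Real.log (Ccal (x + σ * t) (s * t)))
      (-σ / x - s * √(Real.pi * x / 2)) (Set.Ici 0) 0 := by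
  have hlin : HasDerivAt (fun t : ℝ => x + σ * t) σ 0 := by
    simpa using ((hasDerivAt_id (0 : ℝ)).const_mul σ).const_add x
  have hsq : HasDerivAt (fun t : ℝ => √(x + σ * t)) (σ / (2 * √(x + σ * 0))) 0 :=
    hlin.sqrt (by simp; exact hx.ne')
  have hy : HasDerivAt (fun t : ℝ => s * t * √(x + σ * t)) (s * √x) 0 := by
    have := ((hasDerivAt_id (0 : ℝ)).const_mul s).mul hsq
    refine this.congr_deriv ?_
    simp
  have hphi : HasDerivWithinAt (fun t : ℝ => Ccal 1 (s * t * √(x + σ * t)))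
      (-√(Real.pi / 2) * (s * √x)) (Set.Ici 0) 0 := by
    refine HasDerivWithinAt.comp (h₂ := fun y => Ccal 1 y) (s' := Set.Ici 0) 0 ?_ hy.hasDerivWithinAt ?_
    · simpa using phideriv
    · intro t ht
      have ht : 0 ≤ t := ht
      simp only [Set.mem_Ici]; positivity
  have hl1 := hphi.log (by simp [cone])
  have hl2 := hlin.hasDerivWithinAt.log (s := Set.Ici 0) (by simp; exact hx.ne')
  have hfin := hl1.sub hl2
  have hev : ∀ᶠ t in nhdsWithin 0 (Set.Ici (0 : ℝ)), 0 < x + σ * t := by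
    have : ∀ᶠ t in nhds (0 : ℝ), 0 < x + σ * t :=
      hlin.continuousAt.eventually_const_lt (by simpa using hx)
    exact this.filter_mono nhdsWithin_le_nhds
  have key : ∀ t, 0 ≤ t → 0 < x + σ * t → Real.log (Ccal (x + σ * t) (s * t)) =
      Real.log (Ccal 1 (s * t * √(x + σ * t))) - Real.log (x + σ * t) := by
    intro t ht h
    rw [cscale h, Real.log_div (cpos one_pos (by positivity)).ne' h.ne']
  refine (hfin.congr_of_eventuallyEq ?_ ?_).congr_deriv ?_
  · filter_upwards [hev, self_mem_nhdsWithin] with t h ht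
    exact key t ht h
  · exact key 0 le_rfl (by simpa using hx)
  · simp only [mul_zero, zero_mul, add_zero, cone, div_one]
    rw [show Real.pi * x / 2 = Real.pi / 2 * x by ring, Real.sqrt_mul (by positivity)]
    ring

lemma fanti {βL βR lam η η' : ℝ} (hL : 0 < βL) (hR : 0 < βR) (h1 : 0 ≤ lam) (h2 : lam < βL)
    (hη : 0 ≤ η) (h : η ≤ η') : Fcal βL βR lam η' ≤ Fcal βL βR lam η := by
  have a1 := canti (x := βR + lam) (by linarith) hη h
  have a2 := canti (x := βL - lam) (by linarith) hη h
  have p1 := cpos (x := βR + lam) (by linarith) (hη.trans h)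
  have p2 := cpos (x := βL - lam) (by linarith) (hη.trans h)
  have p3 := cpos (x := βR + lam) (by linarith) hη
  unfold Fcal
  gcongr

lemma flog {βL βR lam η : ℝ} (hL : 0 < βL) (hR : 0 < βR) (h1 : 0 ≤ lam) (h2 : lam < βL)
    (hη : 0 ≤ η) : 0 < Fcal βL βR lam η ∧ Real.log (Fcal βL βR lam η) = Real.log (βL * βR) +
      Real.log (Ccal (βR + lam) η) + Real.log (Ccal (βL - lam) η) := by
  have p1 := cpos (x := βR + lam) (by linarith) hη
  have p2 := cpos (x := βL - lam) (by linarith) hη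
  unfold Fcal
  refine ⟨by positivity, ?_⟩
  rw [Real.log_mul (by positivity) p2.ne', Real.log_mul (by positivity) p1.ne']

lemma flogconv {βL βR l1 l2 η1 η2 a b : ℝ} (hL : 0 < βL) (hR : 0 < βR)
    (h1 : 0 ≤ l1) (h1' : l1 < βL) (h2 : 0 ≤ l2) (h2' : l2 < βL) (hne : l1 ≠ l2)
    (he1 : 0 ≤ η1) (he2 : 0 ≤ η2) (ha : 0 < a) (hb : 0 < b) (hab : a + b = 1) :
    Real.log (Fcal βL βR (a * l1 + b * l2) (a * η1 + b * η2)) <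
      a * Real.log (Fcal βL βR l1 η1) + b * Real.log (Fcal βL βR l2 η2) := by
  have hlt : a * l1 + b * l2 < βL := by
    have : a * l1 + b * l2 < a * βL + b * βL := by gcongr
    rwa [← add_mul, hab, one_mul] at this
  rw [(flog hL hR h1 h1' he1).2, (flog hL hR h2 h2' he2).2,
    (flog hL hR (by positivity) hlt (by positivity)).2]
  have c1 := clog (x1 := βR + l1) (x2 := βR + l2) (η1 := η1) (η2 := η2) (by linarith) (by linarith)
    (fun h => hne (by linarith)) he1 he2 ha hb hab
  have c2 := clog (x1 := βL - l1) (x2 := βL - l2) (η1 := η1) (η2 := η2) (by linarith) (by linarith)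
    (fun h => hne (by linarith)) he1 he2 ha hb hab
  have hb' : b = 1 - a := by linarith
  rw [show a * (βR + l1) + b * (βR + l2) = βR + (a * l1 + b * l2) by rw [hb']; ring] at c1
  rw [show a * (βL - l1) + b * (βL - l2) = βL - (a * l1 + b * l2) by rw [hb']; ring] at c2
  have : Real.log (βL * βR) = a * Real.log (βL * βR) + b * Real.log (βL * βR) := by
    rw [← add_mul, hab, one_mul]
  linarith

lemma fzero {βL βR : ℝ} (hL : 0 < βL) (hR : 0 < βR) : Fcal βL βR 0 0 = 1 := by
  unfold Fcal
  rw [cscale (by linarith), cscale (by linarith : (0 : ℝ) < βL - 0)]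
  simp only [zero_mul, cone, add_zero, sub_zero]
  field_simp

lemma fderiv0 {βL βR s : ℝ} (hL : 0 < βL) (hR : 0 < βR) (hs : 0 ≤ s) :
    HasDerivWithinAt (fun t => Real.log (Fcal βL βR t (s * t)))
      ((1 / βL - 1 / βR) - s * (√(Real.pi * βL / 2) + √(Real.pi * βR / 2))) (Set.Ioi 0) 0 := by
  have d1 := clogderiv (σ := 1) hR hs
  have d2 := clogderiv (σ := -1) hL hs
  have d := ((d1.const_add (Real.log (βL * βR))).add d2).mono (Set.Ioi_subset_Ici_self)
  refine (d.congr_of_eventuallyEq ?_ ?_).congr_deriv ?_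
  · have : Set.Iio βL ∈ nhds (0 : ℝ) := Iio_mem_nhds hL
    filter_upwards [self_mem_nhdsWithin, nhdsWithin_le_nhds this] with t ht ht'
    have ht : 0 < t := ht
    rw [(flog hL hR ht.le ht' (by positivity)).2]
    simp [sub_eq_add_neg]
  · rw [(flog hL hR le_rfl hL (by positivity)).2]
    simp
  · ring

lemma half {βL βR κ : ℝ} (hL : 0 < βL) (hLR : βL ≤ βR)
    (hκ : κ = (Real.sqrt (Real.pi * βL / 2) + Real.sqrt (Real.pi * βR / 2))⁻¹)
    (f : ℝ → ℝ)
    (hf : ∀ lam ∈ Set.Ioo 0 βL, 0 < f lam ∧ Fcal βL βR lam (f lam) = 1)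
    (hdiff : ∀ lam ∈ Set.Ioo 0 βL, DifferentiableAt ℝ f lam) :
    Set.BijOn (deriv f) (Set.Ioo 0 βL) (Set.Ioi (κ * (1 / βL - 1 / βR))) := by
  have hR : 0 < βR := hL.trans_le hLR
  set K := Real.sqrt (Real.pi * βL / 2) + Real.sqrt (Real.pi * βR / 2) with hK
  have hKpos : 0 < K := by
    have := Real.pi_pos
    positivity
  set s0 := κ * (1 / βL - 1 / βR) with hs0
  have hs0K : s0 * K = 1 / βL - 1 / βR := by
    rw [hs0, hκ]; field_simp
  have hs0n : 0 ≤ s0 := by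
    have : 1 / βR ≤ 1 / βL := one_div_le_one_div_of_le hL hLR
    rw [hs0, hκ]
    exact mul_nonneg (by positivity) (by linarith)
  -- comparison
  have cmp1 : ∀ t ∈ Set.Ioo 0 βL, ∀ η, 0 ≤ η → 1 < Fcal βL βR t η → η < f t := by
    intro t ht η hη h
    by_contra! hc
    have := fanti hL hR ht.1.le ht.2 (hf t ht).1.le hc
    rw [(hf t ht).2] at this
    linarith
  have cmp2 : ∀ t ∈ Set.Ioo 0 βL, ∀ η, 0 ≤ η → Fcal βL βR t η < 1 → f t < η := by
    intro t ht η hη h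
    by_contra! hc
    have := fanti hL hR ht.1.le ht.2 hη hc
    rw [(hf t ht).2] at this
    linarith
  have hsc : StrictConvexOn ℝ (Set.Ioo 0 βL) f := by
    refine ⟨convex_Ioo _ _, ?_⟩
    intro l1 h1 l2 h2 hne a b ha hb hab
    have hm : a • l1 + b • l2 ∈ Set.Ioo 0 βL := convex_Ioo _ _ h1 h2 ha.le hb.le hab
    simp only [smul_eq_mul] at hm ⊢
    have p1 := (hf l1 h1).1
    have p2 := (hf l2 h2).1
    refine cmp2 _ hm _ (by positivity) ?_
    have := flogconv hL hR h1.1.le h1.2 h2.1.le h2.2 hne p1.le p2.le ha hb hab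
    rw [(hf l1 h1).2, (hf l2 h2).2, Real.log_one, mul_zero, mul_zero, add_zero] at this
    exact (Real.log_neg_iff (flog hL hR hm.1.le hm.2 (by positivity)).1).1 this
  have hmono := hsc.strictMonoOn_deriv hdiff
  -- lower bound
  have lower : ∀ t ∈ Set.Ioo 0 βL, s0 * t < f t := by
    intro t ht
    have hg : StrictConvexOn ℝ (Set.Ico 0 βL) (fun t => Real.log (Fcal βL βR t (s0 * t))) := by
      refine ⟨convex_Ico _ _, ?_⟩
      intro l1 h1 l2 h2 hne a b ha hb hab
      have := flogconv hL hR h1.1 h1.2 h2.1 h2.2 hne (mul_nonneg hs0n h1.1)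
        (mul_nonneg hs0n h2.1) ha hb hab
      simp only [smul_eq_mul]
      rwa [show s0 * (a * l1 + b * l2) = a * (s0 * l1) + b * (s0 * l2) by ring]
    have hd := fderiv0 hL hR hs0n
    have := hg.lt_slope_of_hasDerivWithinAt_Ioi ⟨le_rfl, hL⟩ ⟨ht.1.le, ht.2⟩ ht.1 hd
    rw [← hK, hs0K, sub_self, slope_def_field] at this
    simp only [mul_zero, fzero hL hR, Real.log_one, sub_zero] at this
    have h2 := (div_pos_iff_of_pos_right ht.1).1 this
    have hn : 0 ≤ s0 * t := mul_nonneg hs0n ht.1.le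
    exact cmp1 t ht _ hn ((Real.log_pos_iff (flog hL hR ht.1.le ht.2 hn).1.le).1 h2)
  have upper : ∀ s, s0 < s → ∀ᶠ t in nhdsWithin 0 (Set.Ioi (0 : ℝ)), f t < s * t := by
    intro s hs
    have hsn := hs0n.trans hs.le
    have hd := fderiv0 hL hR hsn
    rw [hasDerivWithinAt_iff_tendsto_slope' (by simp)] at hd
    have hneg : 1 / βL - 1 / βR - s * K < 0 := by
      rw [← hs0K]; nlinarith
    have hI : Set.Iio βL ∈ nhds (0 : ℝ) := Iio_mem_nhds hL
    filter_upwards [hd.eventually_lt_const hneg, self_mem_nhdsWithin, nhdsWithin_le_nhds hI]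
      with t h1 h2 h3
    have h2 : 0 < t := h2
    have hst : 0 ≤ s * t := mul_nonneg hsn h2.le
    rw [slope_def_field] at h1
    simp only [mul_zero, fzero hL hR, Real.log_one, sub_zero] at h1
    have h4 : Real.log (Fcal βL βR t (s * t)) < 0 := by
      by_contra! hc
      exact absurd (div_nonneg hc h2.le) (not_le.2 h1)
    exact cmp2 t ⟨h2, h3⟩ _ hst ((Real.log_neg_iff (flog hL hR h2.le h3 hst).1).1 h4)
  -- extension by zero
  have mvt : ∀ t ∈ Set.Ioo 0 βL, ∃ c ∈ Set.Ioo 0 t, deriv f c = f t / t := by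
    intro t ht
    let g := Function.update f 0 0
    have hgf : ∀ x, x ≠ 0 → g =ᶠ[nhds x] f := by
      intro x hx
      filter_upwards [isOpen_compl_singleton.mem_nhds (show x ∈ ({0} : Set ℝ)ᶜ from hx)] with y hy
      exact Function.update_of_ne hy _ _
    have hc : ContinuousOn g (Set.Icc 0 t) := by
      intro x hx
      rcases hx.1.eq_or_lt with h0 | h0
      · subst h0
        rw [show Set.Icc 0 t = insert 0 (Set.Ioc 0 t) from (Set.Ioc_insert_left hx.2).symm]
        rw [continuousWithinAt_insert_self]
        change Tendsto _ _ _
        rw [nhdsWithin_Ioc_eq_nhdsGT ht.1]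
        have : g 0 = 0 := Function.update_self _ _ _
        rw [this]
        have hU : Tendsto (fun t : ℝ => (s0 + 1) * t) (nhdsWithin 0 (Set.Ioi 0)) (nhds 0) := by
          have : Continuous (fun t : ℝ => (s0 + 1) * t) := by fun_prop
          have := this.tendsto 0
          rw [mul_zero] at this
          exact this.mono_left nhdsWithin_le_nhds
        have hI : Set.Iio βL ∈ nhds (0 : ℝ) := Iio_mem_nhds hL
        refine tendsto_of_tendsto_of_tendsto_of_le_of_le' tendsto_const_nhds hU ?_ ?_
        · filter_upwards [self_mem_nhdsWithin, nhdsWithin_le_nhds hI] with y h1 h2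
          have h1 : 0 < y := h1
          rw [show g y = f y from Function.update_of_ne h1.ne' _ _]
          exact (hf y ⟨h1, h2⟩).1.le
        · filter_upwards [self_mem_nhdsWithin, upper (s0 + 1) (by linarith)] with y h1 h2
          have h1 : 0 < y := h1
          rw [show g y = f y from Function.update_of_ne h1.ne' _ _]
          exact h2.le
      · exact ((hdiff x ⟨h0, hx.2.trans_lt ht.2⟩).continuousAt.congr
          (hgf x h0.ne').symm).continuousWithinAt
    have hd : DifferentiableOn ℝ g (Set.Ioo 0 t) := by
      intro x hx
      exact ((hgf x hx.1.ne').differentiableAt_iff.2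
        (hdiff x ⟨hx.1, hx.2.trans ht.2⟩)).differentiableWithinAt
    obtain ⟨c, hc, h⟩ := exists_deriv_eq_slope g ht.1 hc hd
    refine ⟨c, hc, ?_⟩
    rw [(hgf c hc.1.ne').deriv_eq] at h
    rw [h, show g 0 = 0 from Function.update_self _ _ _,
      show g t = f t from Function.update_of_ne ht.1.ne' _ _, sub_zero, sub_zero]
  refine ⟨?_, hmono.injOn, ?_⟩
  · intro t ht
    obtain ⟨c, hc, h⟩ := mvt t ht
    have h1 := hmono ⟨hc.1, hc.2.trans ht.2⟩ ht hc.2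
    have h2 : s0 < f t / t := (lt_div_iff₀ ht.1).2 (lower t ht)
    exact h2.trans (h ▸ h1)
  · intro y hy
    have hy : s0 < y := hy
    have hyn := hs0n.trans hy.le
    have hoc := Set.ordConnected_Ioo.image_deriv hdiff
    have hlow : ∃ c ∈ Set.Ioo 0 βL, deriv f c < y := by
      have hI : Set.Iio βL ∈ nhds (0 : ℝ) := Iio_mem_nhds hL
      obtain ⟨t, h1, h2, h3⟩ := ((upper y hy).and
        (Filter.Eventually.and (self_mem_nhdsWithin : ∀ᶠ t in nhdsWithin (0 : ℝ) (Set.Ioi 0),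
          t ∈ Set.Ioi (0 : ℝ)) (nhdsWithin_le_nhds hI))).exists
      obtain ⟨c, hc, h⟩ := mvt t ⟨h2, h3⟩
      refine ⟨c, ⟨hc.1, hc.2.trans h3⟩, ?_⟩
      rw [h, div_lt_iff₀ h2]; exact h1
    have hhigh : ∃ c ∈ Set.Ioo 0 βL, y < deriv f c := by
      suffices ∃ t ∈ Set.Ioo 0 βL, 1 < Fcal βL βR t (y * t) by
        obtain ⟨t, ht, h⟩ := this
        obtain ⟨c, hc, h'⟩ := mvt t ht
        refine ⟨c, ⟨hc.1, hc.2.trans ht.2⟩, ?_⟩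
        rw [h', lt_div_iff₀ ht.1]
        exact cmp1 t ht _ (mul_nonneg hyn ht.1.le) h
      have hη : 0 ≤ y * βL := mul_nonneg hyn hL.le
      set A := βL * βR * (Ccal 1 (y * βL * √(βR + βL)) / (βR + βL)) * Ccal 1 (y * βL * √βL) with hA
      have q1 := cpos one_pos (show 0 ≤ y * βL * √(βR + βL) by positivity)
      have q2 := cpos one_pos (show 0 ≤ y * βL * √βL by positivity)
      have hApos : 0 < A := by positivity
      set δ := min (βL / 2) (A / 2) with hδ
      have hδpos : 0 < δ := lt_min (by positivity) (by positivity)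
      have hδ1 : δ ≤ βL / 2 := min_le_left _ _
      have hδ2 : δ ≤ A / 2 := min_le_right _ _
      have ht : βL - δ ∈ Set.Ioo 0 βL := ⟨by linarith, by linarith⟩
      refine ⟨βL - δ, ht, ?_⟩
      have hAδ : 1 < A / δ := by rw [lt_div_iff₀ hδpos]; linarith
      refine hAδ.trans_le (le_trans ?_ (fanti hL hR ht.1.le ht.2 (mul_nonneg hyn ht.1.le)
        (mul_le_mul_of_nonneg_left ht.2.le hyn)))
      unfold Fcal
      rw [sub_sub_cancel, cscale (x := βR + (βL - δ)) (by linarith), cscale hδpos, hA, mul_div_assoc]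
      have hx : 0 < βR + (βL - δ) := by linarith
      have hle : βR + (βL - δ) ≤ βR + βL := by linarith
      have r1 : Ccal 1 (y * βL * √(βR + βL)) ≤ Ccal 1 (y * βL * √(βR + (βL - δ))) :=
        canti one_pos (by positivity) (by gcongr)
      have r2 : Ccal 1 (y * βL * √βL) ≤ Ccal 1 (y * βL * √δ) :=
        canti one_pos (by positivity) (by gcongr; linarith)
      have q3 := q1.trans_le r1
      have q4 := q2.trans_le r2
      gcongr
    obtain ⟨c, hc, h1⟩ := hlow
    obtain ⟨d, hd, h2⟩ := hhigh
    exact hoc.out ⟨c, hc, rfl⟩ ⟨d, hd, rfl⟩ ⟨h1.le, h2.le⟩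

theorem deriv_cgf_bijective
    (βL βR TL TR κ : ℝ) (hβL : 0 < βL) (hLR : βL ≤ βR)
    (hTL : TL = 1 / βL) (hTR : TR = 1 / βR)
    (hκ : κ = (Real.sqrt (Real.pi * βL / 2) + Real.sqrt (Real.pi * βR / 2))⁻¹)
    (f : ℝ → ℝ)
    (hf : ∀ lam ∈ Set.Ioo (-βR) (βL - βR) ∪ Set.Ioo 0 βL,
      0 < f lam ∧ Fcal βL βR lam (f lam) = 1)
    (hdiff : ∀ lam ∈ Set.Ioo (-βR) (βL - βR) ∪ Set.Ioo 0 βL,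
      DifferentiableAt ℝ f lam) :
    Set.BijOn (deriv f) (Set.Ioo 0 βL) (Set.Ioi (κ * (TL - TR))) ∧
      Set.BijOn (deriv f) (Set.Ioo (-βR) (βL - βR)) (Set.Iio (-(κ * (TL - TR)))) := by
  subst hTL hTR
  refine ⟨half hβL hLR hκ f (fun l hl => hf l (Or.inr hl)) (fun l hl => hdiff l (Or.inr hl)), ?_⟩
  have hmem : ∀ l ∈ Set.Ioo 0 βL, (βL - βR) - l ∈ Set.Ioo (-βR) (βL - βR) := by
    intro l hl
    exact ⟨by linarith [hl.2], by linarith [hl.1]⟩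
  have hmem' : ∀ l ∈ Set.Ioo (-βR) (βL - βR), (βL - βR) - l ∈ Set.Ioo 0 βL := by
    intro l hl
    exact ⟨by linarith [hl.2], by linarith [hl.1]⟩
  have h := half hβL hLR hκ (fun l => f ((βL - βR) - l)) (by
    intro l hl
    have := hf _ (Or.inl (hmem l hl))
    refine ⟨this.1, ?_⟩
    rw [← this.2]
    unfold Fcal
    rw [show βR + (βL - βR - l) = βL - l by ring, show βL - (βL - βR - l) = βR + l by ring]
    ring) (by
    intro l hl
    have := hdiff _ (Or.inl (hmem l hl))
    exact DifferentiableAt.comp l this (by fun_prop))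
  have hd : ∀ l, deriv (fun l => f ((βL - βR) - l)) l = -deriv f ((βL - βR) - l) := by
    intro l
    exact deriv_comp_const_sub ..
  refine ⟨?_, ?_, ?_⟩
  · intro l hl
    have := h.mapsTo (hmem' l hl)
    rw [hd, sub_sub_cancel] at this
    rw [Set.mem_Ioi] at this
    exact lt_neg_of_lt_neg this
  · intro a ha b hb hab
    have := h.injOn (hmem' a ha) (hmem' b hb) (by rw [hd, hd, sub_sub_cancel, sub_sub_cancel, hab])
    linarith
  · intro y hy
    have hy : y < _ := hy
    obtain ⟨l, hl, e⟩ := h.surjOn (show -y ∈ Set.Ioi _ from lt_neg_of_lt_neg hy)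
    refine ⟨_, hmem l hl, ?_⟩
    rw [hd] at e
    linarith
end

section
/- Let 0 < β_L ≤ β_R, T_L = 1/β_L, T_R = 1/β_R, κ = (√(πβ_L/2)+√(πβ_R/2))^{−1}, j* = κ(T_L − T_R), f the cumulant generating function and I(j) = sup_{λ∈ℝ}(λ j − f(λ)) its Legendre transform. Then I is nonnegative, convex and finite on all of ℝ, and I is infinitely differentiable and strictly convex on ℝ ∖ [−j*, j*]. -/
open MeasureTheory

/-- `f : ℝ → [0,∞]` is the cumulant generating function of the current:
`f(λ)` is the unique positive solution of `F(λ, f(λ)) = 1` on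
`(−β_R, β_L) ∖ [β_L−β_R, 0]`, `f ≡ 0` on the interval between `β_L−β_R` and `0`,
and `f ≡ +∞` outside `(−β_R, β_L)`. -/
def IsCGF (βL βR : ℝ) (f : ℝ → EReal) : Prop :=
  (∀ lam ∈ Set.uIcc (βL - βR) 0, f lam = 0) ∧
  (∀ lam ∈ Set.Ioo (-βR) βL \ Set.uIcc (βL - βR) 0,
      ∃ η : ℝ, 0 < η ∧ Fcal βL βR lam η = 1 ∧ f lam = (η : EReal)) ∧
  (∀ lam ∉ Set.Ioo (-βR) βL, f lam = ⊤)

/-- Legendre transform `I(j) = sup_λ (λ j − f(λ))`. -/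
noncomputable def legendre (f : ℝ → EReal) (j : ℝ) : EReal :=
  ⨆ lam : ℝ, ((lam * j : ℝ) : EReal) - f lam


/-- integrand -/
noncomputable def kE (n : ℤ) (x η v : ℝ) : ℝ := v ^ n * Real.exp (-η / v - x * v ^ 2 / 2)

/-- moments -/
noncomputable def kK (n : ℤ) (x η : ℝ) : ℝ := ∫ v in Set.Ioi (0 : ℝ), kE n x η v

lemma Ccal_eq (x η : ℝ) : Ccal x η = kK 1 x η := by
  simp [Ccal, kK, kE]

lemma kE_pos (n : ℤ) (x η : ℝ) {v : ℝ} (hv : 0 < v) : 0 < kE n x η v := by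
  unfold kE; positivity

lemma kE_mono (n : ℤ) {x x' η η' v : ℝ} (hx : x' ≤ x) (hη : η' ≤ η) (hv : 0 < v) :
    kE n x η v ≤ kE n x' η' v := by
  unfold kE
  have : -η / v ≤ -η' / v := by gcongr
  have : x' * v ^ 2 / 2 ≤ x * v ^ 2 / 2 := by gcongr
  gcongr

lemma kE_contOn (n : ℤ) (x η : ℝ) : ContinuousOn (kE n x η) (Set.Ioi 0) := by
  unfold kE
  intro v hv
  have hv' : v ≠ 0 := ne_of_gt hv
  apply ContinuousAt.continuousWithinAt
  have := continuousAt_zpow₀ v n (Or.inl hv')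
  fun_prop (disch := assumption)

lemma kE_meas (n : ℤ) (x η : ℝ) :
    AEStronglyMeasurable (kE n x η) (volume.restrict (Set.Ioi 0)) :=
  (kE_contOn n x η).aestronglyMeasurable measurableSet_Ioi

lemma kE_int_nat (n : ℕ) {x η : ℝ} (hx : 0 < x) (hη : 0 ≤ η) :
    IntegrableOn (kE n x η) (Set.Ioi 0) := by
  have h := integrableOn_rpow_mul_exp_neg_mul_sq (b := x / 2) (by positivity) (s := (n : ℝ))
    (by have : (0 : ℝ) ≤ n := n.cast_nonneg
        linarith)
  refine Integrable.mono' h (kE_meas _ _ _) ?_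
  filter_upwards [ae_restrict_mem measurableSet_Ioi] with v hv
  rw [Real.norm_of_nonneg (kE_pos _ _ _ hv).le]
  refine (kE_mono _ le_rfl hη hv).trans (le_of_eq ?_)
  simp only [kE, zpow_natCast, Real.rpow_natCast]
  congr 2; ring

lemma kE_int {x η : ℝ} (n : ℤ) (hx : 0 < x) (hη : 0 < η) :
    IntegrableOn (kE n x η) (Set.Ioi 0) := by
  obtain ⟨m, rfl | rfl⟩ := n.eq_nat_or_neg
  · exact kE_int_nat m hx hη.le
  have h := (kE_int_nat 0 hx (le_refl 0)).const_mul (m.factorial / η ^ m)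
  refine Integrable.mono' h (kE_meas _ _ _) ?_
  filter_upwards [ae_restrict_mem measurableSet_Ioi] with v hv
  rw [Real.norm_of_nonneg (kE_pos _ _ _ hv).le]
  have hv : 0 < v := hv
  simp only [kE, zpow_neg, zpow_natCast, Nat.cast_zero, zpow_zero, one_mul]
  have h1 := Real.pow_div_factorial_le_exp (η / v) (by positivity) m
  have e : -η / v - x * v ^ 2 / 2 = -(η / v) + (-0 / v - x * v ^ 2 / 2) := by ring
  rw [e, Real.exp_add, ← mul_assoc]
  gcongr
  rw [Real.exp_neg, ← mul_inv, inv_le_comm₀ (by positivity) (by positivity)]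
  calc (m.factorial / η ^ m : ℝ)⁻¹ = v ^ m * ((η / v) ^ m / m.factorial) := by
        rw [div_pow]; field_simp
    _ ≤ _ := by gcongr

lemma int_pos_aux {g : ℝ → ℝ} (hg : ContinuousOn g (Set.Ioi 0))
    (h0 : ∀ v, 0 < v → 0 ≤ g v) (hi : IntegrableOn g (Set.Ioi 0)) {v₀ : ℝ} (hv₀ : 0 < v₀)
    (hne : g v₀ ≠ 0) : 0 < ∫ v in Set.Ioi (0 : ℝ), g v := by
  have hae : 0 ≤ᵐ[volume.restrict (Set.Ioi (0:ℝ))] g := by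
    filter_upwards [ae_restrict_mem measurableSet_Ioi] with v hv using h0 v hv
  refine lt_of_le_of_ne (integral_nonneg_of_ae hae) fun h => hne ?_
  have h2 := (integral_eq_zero_iff_of_nonneg_ae hae hi).1 h.symm
  exact Measure.eqOn_open_of_ae_eq h2 isOpen_Ioi hg continuousOn_const hv₀

lemma kK_pos {x η : ℝ} (n : ℤ) (hx : 0 < x) (hη : 0 < η) : 0 < kK n x η :=
  int_pos_aux (kE_contOn n x η) (fun _ hv => (kE_pos n x η hv).le) (kE_int n hx hη) one_pos
    (kE_pos n x η one_pos).ne'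

lemma kE_succ_two (n : ℤ) (x η : ℝ) {v : ℝ} (hv : 0 < v) :
    kE (n + 2) x η v = v ^ 2 * kE n x η v := by
  unfold kE; rw [zpow_add₀ hv.ne']; norm_cast; ring

lemma kE_pred (n : ℤ) (x η : ℝ) {v : ℝ} (hv : 0 < v) :
    kE (n - 1) x η v = kE n x η v / v := by
  unfold kE; rw [zpow_sub_one₀ hv.ne']; ring

/-- derivative of the moments -/
noncomputable def kD (a b : ℝ) : ℝ × ℝ →L[ℝ] ℝ :=
  (-(a / 2)) • ContinuousLinearMap.fst ℝ ℝ ℝ + (-b) • ContinuousLinearMap.snd ℝ ℝ ℝ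

lemma kD_meas {μ : Measure ℝ} {f g : ℝ → ℝ} (hf : AEStronglyMeasurable f μ)
    (hg : AEStronglyMeasurable g μ) : AEStronglyMeasurable (fun v => kD (f v) (g v)) μ := by
  have h1 : AEStronglyMeasurable (fun v => -(f v / 2)) μ := by
    simp only [div_eq_mul_inv]
    exact (hf.mul_const (2⁻¹)).neg
  have h2 : AEStronglyMeasurable (fun v => -(g v)) μ := hg.neg
  exact (h1.smul_const _).add (h2.smul_const _)

lemma kD_int {μ : Measure ℝ} {f g : ℝ → ℝ} (hf : Integrable f μ)
    (hg : Integrable g μ) : ∫ v, kD (f v) (g v) ∂μ = kD (∫ v, f v ∂μ) (∫ v, g v ∂μ) := by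
  have h1 : Integrable (fun v => -(f v / 2)) μ := (hf.div_const 2).neg
  have h2 : Integrable (fun v => -(g v)) μ := hg.neg
  unfold kD
  rw [integral_add (h1.smul_const _) (h2.smul_const _), integral_smul_const, integral_smul_const,
    integral_neg, integral_neg, integral_div]

lemma kD_norm {a b : ℝ} (ha : 0 ≤ a) (hb : 0 ≤ b) : ‖kD a b‖ ≤ a + b := by
  unfold kD
  refine (norm_add_le _ _).trans ?_
  rw [norm_smul, norm_smul]
  have f1 := ContinuousLinearMap.norm_fst_le ℝ ℝ ℝ
  have f2 := ContinuousLinearMap.norm_snd_le ℝ ℝ ℝ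
  rw [norm_neg, norm_neg, Real.norm_of_nonneg hb, Real.norm_of_nonneg (by positivity)]
  have g1 : a / 2 * ‖ContinuousLinearMap.fst ℝ ℝ ℝ‖ ≤ a / 2 * 1 := by gcongr
  have g2 : b * ‖ContinuousLinearMap.snd ℝ ℝ ℝ‖ ≤ b * 1 := by gcongr
  linarith

lemma kE_hasFDerivAt (n : ℤ) (q : ℝ × ℝ) {v : ℝ} (hv : 0 < v) :
    HasFDerivAt (fun q : ℝ × ℝ => kE n q.1 q.2 v)
      (kD (kE (n + 2) q.1 q.2 v) (kE (n - 1) q.1 q.2 v)) q := by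
  have hf : HasFDerivAt (fun q : ℝ × ℝ => q.1) (ContinuousLinearMap.fst ℝ ℝ ℝ) q := hasFDerivAt_fst
  have hs : HasFDerivAt (fun q : ℝ × ℝ => q.2) (ContinuousLinearMap.snd ℝ ℝ ℝ) q := hasFDerivAt_snd
  have := (((hs.mul_const (-v⁻¹)).sub (hf.mul_const (v ^ 2 / 2))).exp).const_mul (v ^ n)
  have hfun : (fun q : ℝ × ℝ => kE n q.1 q.2 v) =
      fun q : ℝ × ℝ => v ^ n * Real.exp (q.2 * (-v⁻¹) - q.1 * (v ^ 2 / 2)) := by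
    funext q; unfold kE; congr 2; ring
  rw [hfun]
  refine this.congr_fderiv ?_
  have h3 : v ^ n * Real.exp (q.2 * (-v⁻¹) - q.1 * (v ^ 2 / 2)) = kE n q.1 q.2 v :=
    (congrFun hfun q).symm
  rw [kE_succ_two _ _ _ hv, kE_pred _ _ _ hv, ← h3]
  simp only [Pi.sub_apply]
  ext <;> simp [kD] <;> ring

lemma kK_hasFDerivAt (n : ℤ) {p : ℝ × ℝ} (h1 : 0 < p.1) (h2 : 0 < p.2) :
    HasFDerivAt (fun q : ℝ × ℝ => kK n q.1 q.2)
      (kD (kK (n + 2) p.1 p.2) (kK (n - 1) p.1 p.2)) p := by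
  have key := hasFDerivAt_integral_of_dominated_of_fderiv_le (𝕜 := ℝ)
    (μ := volume.restrict (Set.Ioi (0:ℝ)))
    (F := fun (q : ℝ × ℝ) v => kE n q.1 q.2 v)
    (F' := fun q v => kD (kE (n + 2) q.1 q.2 v) (kE (n - 1) q.1 q.2 v))
    (bound := fun v => kE (n + 2) (p.1 / 2) (p.2 / 2) v + kE (n - 1) (p.1 / 2) (p.2 / 2) v)
    (x₀ := p) (s := Set.Ioi (p.1 / 2) ×ˢ Set.Ioi (p.2 / 2))
    (prod_mem_nhds (Ioi_mem_nhds (by linarith)) (Ioi_mem_nhds (by linarith)))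
    (Filter.Eventually.of_forall fun q => kE_meas _ _ _)
    (kE_int n h1 h2)
    ?_ ?_ ?_ ?_
  · exact key.congr_fderiv (kD_int (kE_int (n + 2) h1 h2) (kE_int (n - 1) h1 h2))
  · exact kD_meas (kE_meas (n+2) p.1 p.2) (kE_meas (n-1) p.1 p.2)
  · filter_upwards [ae_restrict_mem measurableSet_Ioi] with v hv
    rintro q ⟨hq1, hq2⟩
    have e1 := kE_mono (n + 2) (le_of_lt hq1) (le_of_lt hq2) hv
    have e2 := kE_mono (n - 1) (le_of_lt hq1) (le_of_lt hq2) hv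
    exact (kD_norm (kE_pos (n + 2) q.1 q.2 hv).le (kE_pos (n - 1) q.1 q.2 hv).le).trans
      (add_le_add e1 e2)
  · exact (kE_int _ (by positivity) (by positivity)).add (kE_int _ (by positivity) (by positivity))
  · filter_upwards [ae_restrict_mem measurableSet_Ioi] with v hv
    exact fun q _ => kE_hasFDerivAt n q hv

lemma kK_contDiffOn (m : ℕ) : ∀ n : ℤ, ContDiffOn ℝ m (fun q : ℝ × ℝ => kK n q.1 q.2)
    (Set.Ioi 0 ×ˢ Set.Ioi 0) := by
  have hU : IsOpen ((Set.Ioi (0:ℝ)) ×ˢ (Set.Ioi (0:ℝ))) := isOpen_Ioi.prod isOpen_Ioi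
  induction m with
  | zero =>
    intro n
    rw [Nat.cast_zero, contDiffOn_zero]
    exact fun p hp => (kK_hasFDerivAt n hp.1 hp.2).continuousAt.continuousWithinAt
  | succ m ih =>
    intro n
    rw [Nat.cast_succ, contDiffOn_succ_iff_hasFDerivWithinAt_of_uniqueDiffOn hU.uniqueDiffOn]
    refine ⟨by simp, fun p => kD (kK (n + 2) p.1 p.2) (kK (n - 1) p.1 p.2), ?_,
      fun p hp => (kK_hasFDerivAt n hp.1 hp.2).hasFDerivWithinAt⟩
    unfold kD
    exact (((ih (n+2)).div_const 2).neg.smul contDiffOn_const).add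
      ((ih (n-1)).neg.smul contDiffOn_const)

lemma kK_contDiffAt (n : ℤ) {p : ℝ × ℝ} (h1 : 0 < p.1) (h2 : 0 < p.2) :
    ContDiffAt ℝ (⊤ : ℕ∞) (fun q : ℝ × ℝ => kK n q.1 q.2) p :=
  (contDiffOn_infty.2 fun m => kK_contDiffOn m n).contDiffAt
    (prod_mem_nhds (Ioi_mem_nhds h1) (Ioi_mem_nhds h2))

/-- chain rule along a curve -/
lemma kK_hasDerivAt (n : ℤ) {x η : ℝ → ℝ} {x' η' t : ℝ} (hx : HasDerivAt x x' t)
    (hη : HasDerivAt η η' t) (h1 : 0 < x t) (h2 : 0 < η t) :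
    HasDerivAt (fun s => kK n (x s) (η s))
      (-(kK (n + 2) (x t) (η t) / 2) * x' - kK (n - 1) (x t) (η t) * η') t := by
  have := (kK_hasFDerivAt n (p := (x t, η t)) h1 h2).comp_hasDerivAt t (hx.prodMk hη)
  refine this.congr_deriv ?_
  simp [kD]; ring

lemma kK_one_zero {x : ℝ} (hx : 0 < x) : kK 1 x 0 = 1 / x := by
  have h := integral_rpow_mul_exp_neg_mul_rpow (p := 2) (q := 1) (b := x / 2) (by norm_num)
    (by norm_num) (by positivity)
  norm_num at h
  rw [Real.rpow_neg_one] at h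
  rw [kK, one_div, show x⁻¹ = (x/2)⁻¹ * (1/2) by field_simp, ← one_div 2] at *
  rw [← h]
  refine integral_congr_ae (Filter.Eventually.of_forall fun v => ?_)
  simp only [kE, zpow_one]; congr 2; ring

lemma kK_zero_zero {x : ℝ} : kK 0 x 0 = √(Real.pi / (x / 2)) / 2 := by
  rw [← integral_gaussian_Ioi, kK]
  refine integral_congr_ae (Filter.Eventually.of_forall fun v => ?_)
  simp only [kE, zpow_zero, one_mul]; congr 1; ring

/-- upper bound on `C` -/
lemma kK_one_le {x η : ℝ} (hx : 0 < x) (hη : 0 ≤ η) : kK 1 x η ≤ 1 / x - η * kK 0 x η := by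
  have i1 : IntegrableOn (kE 1 x η) (Set.Ioi 0) := kE_int_nat 1 hx hη
  have i0 : IntegrableOn (kE 0 x η) (Set.Ioi 0) := kE_int_nat 0 hx hη
  have i10 : IntegrableOn (kE 1 x 0) (Set.Ioi 0) := kE_int_nat 1 hx le_rfl
  rw [← kK_one_zero hx, le_sub_iff_add_le]
  unfold kK
  rw [← integral_const_mul, ← integral_add i1 (i0.const_mul η)]
  refine setIntegral_mono_on (i1.add (i0.const_mul η)) i10 measurableSet_Ioi fun v hv => ?_
  have hv : 0 < v := hv
  simp only [kE, zpow_one, zpow_zero, one_mul]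
  have e : -η / v - x * v ^ 2 / 2 = -(η / v) + (-0 / v - x * v ^ 2 / 2) := by ring
  rw [e, Real.exp_add]
  have h1 : v * Real.exp (-(η/v)) + η * Real.exp (-(η/v)) ≤ v := by
    have h := Real.add_one_le_exp (η / v)
    rw [Real.exp_neg, ← add_mul, ← div_eq_mul_inv, div_le_iff₀ (Real.exp_pos _)]
    calc v + η = v * (η / v + 1) := by field_simp; ring
      _ ≤ _ := by gcongr
  nlinarith [Real.exp_pos (-0 / v - x * v ^ 2 / 2)]

/-- lower bound on `C` -/
lemma kK_one_ge {x η : ℝ} (hx : 0 < x) (hη : 0 ≤ η) : 1 / x - η * kK 0 x 0 ≤ kK 1 x η := by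
  have i1 : IntegrableOn (kE 1 x η) (Set.Ioi 0) := kE_int_nat 1 hx hη
  have i0 : IntegrableOn (kE 0 x 0) (Set.Ioi 0) := kE_int_nat 0 hx le_rfl
  have i10 : IntegrableOn (kE 1 x 0) (Set.Ioi 0) := kE_int_nat 1 hx le_rfl
  rw [← kK_one_zero hx]
  unfold kK
  rw [← integral_const_mul, ← integral_sub i10 (i0.const_mul η)]
  refine setIntegral_mono_on (i10.sub (i0.const_mul η)) i1 measurableSet_Ioi fun v hv => ?_
  have hv : 0 < v := hv
  simp only [kE, zpow_one, zpow_zero, one_mul]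
  have e : -η / v - x * v ^ 2 / 2 = -(η / v) + (-0 / v - x * v ^ 2 / 2) := by ring
  rw [e, Real.exp_add]
  have h1 : v - η ≤ v * Real.exp (-(η/v)) := by
    have h := Real.add_one_le_exp (-(η / v))
    calc v - η = v * (-(η / v) + 1) := by field_simp; ring
      _ ≤ _ := by gcongr
  nlinarith [Real.exp_pos (-0 / v - x * v ^ 2 / 2)]

/-- continuity of `K 0` along curves ending at `η = 0` -/
lemma kK_zero_tendsto {l : Filter ℝ} [l.IsCountablyGenerated] {x η : ℝ → ℝ} {x₀ : ℝ} (hx₀ : 0 < x₀)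
    (hx : Filter.Tendsto x l (nhds x₀)) (hη : Filter.Tendsto η l (nhds 0))
    (hη0 : ∀ᶠ t in l, 0 ≤ η t) :
    Filter.Tendsto (fun t => kK 0 (x t) (η t)) l (nhds (kK 0 x₀ 0)) := by
  unfold kK
  refine tendsto_integral_filter_of_dominated_convergence (kE 0 (x₀ / 2) 0)
    (Filter.Eventually.of_forall fun t => kE_meas _ _ _) ?_
    (kE_int_nat 0 (by positivity) le_rfl) ?_
  · filter_upwards [hη0, hx.eventually (Ioi_mem_nhds (show x₀ / 2 < x₀ by linarith))] with t h1 h2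
    filter_upwards [ae_restrict_mem measurableSet_Ioi] with v hv
    rw [Real.norm_of_nonneg (kE_pos _ _ _ hv).le]
    exact kE_mono 0 (le_of_lt h2) h1 hv
  · filter_upwards [ae_restrict_mem measurableSet_Ioi] with v hv
    unfold kE
    refine Filter.Tendsto.const_mul _ ?_
    refine (Real.continuous_exp.tendsto _).comp ?_
    exact ((hη.neg.div_const v).sub ((hx.mul_const _).div_const 2))

/-- strict Cauchy-Schwarz -/
lemma kK_cs {x η : ℝ} (hx : 0 < x) (hη : 0 < η) {a : ℝ} (ha : a ≠ 0) (p : ℝ) :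
    (a * kK 3 x η / 2 + p * kK 0 x η) ^ 2 <
      kK 1 x η * (a ^ 2 * kK 5 x η / 4 + a * p * kK 2 x η + p ^ 2 * kK (-1) x η) := by
  have hpos := kK_pos 1 hx hη
  set B := a * kK 3 x η / 2 + p * kK 0 x η with hB
  set t := B / kK 1 x η with ht
  have hpt : ∀ v ∈ Set.Ioi (0:ℝ), (a * v ^ 2 / 2 + p / v - t) ^ 2 * kE 1 x η v =
      a ^ 2 / 4 * kE 5 x η v + a * p * kE 2 x η v + p ^ 2 * kE (-1) x η v
        + (-(t * a)) * kE 3 x η v + (-(2 * t * p)) * kE 0 x η v + t ^ 2 * kE 1 x η v := by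
    intro v hv
    have hv : v ≠ 0 := ne_of_gt hv
    simp only [kE, zpow_ofNat, zpow_neg_one]
    field_simp
    ring
  have hI : IntegrableOn (fun v => a ^ 2 / 4 * kE 5 x η v + a * p * kE 2 x η v + p ^ 2 * kE (-1) x η v
        + (-(t * a)) * kE 3 x η v + (-(2 * t * p)) * kE 0 x η v + t ^ 2 * kE 1 x η v) (Set.Ioi 0) ∧
      ∫ v in Set.Ioi (0:ℝ), (a ^ 2 / 4 * kE 5 x η v + a * p * kE 2 x η v + p ^ 2 * kE (-1) x η v
        + (-(t * a)) * kE 3 x η v + (-(2 * t * p)) * kE 0 x η v + t ^ 2 * kE 1 x η v) =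
      a ^ 2 / 4 * kK 5 x η + a * p * kK 2 x η + p ^ 2 * kK (-1) x η
        + (-(t * a)) * kK 3 x η + (-(2 * t * p)) * kK 0 x η + t ^ 2 * kK 1 x η := by
    have j (c : ℝ) (n : ℤ) : Integrable (fun v => c * kE n x η v) (volume.restrict (Set.Ioi 0)) :=
      (kE_int n hx hη).const_mul c
    have j2 := (j (a ^ 2 / 4) 5).add (j (a * p) 2)
    have j3 := j2.add (j (p ^ 2) (-1))
    have j4 := j3.add (j (-(t * a)) 3)
    have j5 := j4.add (j (-(2 * t * p)) 0)
    refine ⟨j5.add (j (t ^ 2) 1), ?_⟩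
    unfold kK
    simp only [← integral_const_mul]
    refine (integral_add j5 (j _ _)).trans ?_
    congr 1
    refine (integral_add j4 (j _ _)).trans ?_
    congr 1
    refine (integral_add j3 (j _ _)).trans ?_
    congr 1
    refine (integral_add j2 (j _ _)).trans ?_
    congr 1
    exact integral_add (j _ _) (j _ _)
  have key : 0 < ∫ v in Set.Ioi (0:ℝ), (a * v ^ 2 / 2 + p / v - t) ^ 2 * kE 1 x η v := by
    have hcont : ContinuousOn (fun v => (a * v ^ 2 / 2 + p / v - t) ^ 2 * kE 1 x η v)
        (Set.Ioi 0) := by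
      refine ContinuousOn.mul ?_ (kE_contOn _ _ _)
      intro v hv
      have hv' : v ≠ 0 := ne_of_gt hv
      apply ContinuousAt.continuousWithinAt
      fun_prop (disch := assumption)
    have hgint : IntegrableOn (fun v => (a * v ^ 2 / 2 + p / v - t) ^ 2 * kE 1 x η v)
        (Set.Ioi 0) := by
      refine Integrable.congr hI.1 ?_
      filter_upwards [ae_restrict_mem measurableSet_Ioi] with v hv using (hpt v hv).symm
    have hnn : ∀ v, 0 < v → 0 ≤ (a * v ^ 2 / 2 + p / v - t) ^ 2 * kE 1 x η v :=
      fun v hv => mul_nonneg (sq_nonneg _) (kE_pos _ _ _ hv).le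
    by_contra hcon
    have hz : ∀ v, 0 < v → a * v ^ 2 / 2 + p / v - t = 0 := by
      intro v hv
      by_contra hne
      exact hcon (int_pos_aux hcont hnn hgint hv
        (mul_ne_zero (pow_ne_zero _ hne) (kE_pos _ _ _ hv).ne'))
    have z1 := hz 1 (by norm_num)
    have z2 := hz 2 (by norm_num)
    have z3 := hz 3 (by norm_num)
    apply ha
    linarith
  have heq : ∫ v in Set.Ioi (0:ℝ), (a * v ^ 2 / 2 + p / v - t) ^ 2 * kE 1 x η v =
      (a ^ 2 * kK 5 x η / 4 + a * p * kK 2 x η + p ^ 2 * kK (-1) x η) - 2 * t * B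
        + t ^ 2 * kK 1 x η := by
    rw [setIntegral_congr_fun measurableSet_Ioi hpt, hI.2, hB]
    ring
  rw [heq] at key
  have htB : t * kK 1 x η = B := by rw [ht]; field_simp
  have h5 := mul_pos hpos key
  nlinarith

/-- the function `F` -/
noncomputable def kG (b r : ℝ) (p : ℝ × ℝ) : ℝ :=
  b * r * kK 1 (r + p.1) p.2 * kK 1 (b - p.1) p.2

lemma kK_anti {x η η' : ℝ} (hx : 0 < x) (hη : 0 < η) (h : η < η') : kK 1 x η' < kK 1 x η := by
  have hd : ∀ y ∈ Set.Ioi (0:ℝ), HasDerivAt (fun s => kK 1 x s) (- kK 0 x y) y := by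
    intro y hy
    refine (kK_hasDerivAt 1 (hasDerivAt_const y x) (hasDerivAt_id y) hx hy).congr_deriv ?_
    simp
  refine strictAntiOn_of_deriv_neg (convex_Ioi 0)
    (fun y hy => (hd y hy).continuousAt.continuousWithinAt) ?_ hη (hη.trans h) h
  intro y hy
  rw [interior_Ioi] at hy
  rw [(hd y hy).deriv]
  exact neg_neg_of_pos (kK_pos 0 hx hy)

lemma kG_anti {b r l η η' : ℝ} (hb : 0 < b) (hr : 0 < r) (h1 : -r < l) (h2 : l < b) (hη : 0 < η)
    (h : η < η') : kG b r (l, η') < kG b r (l, η) := by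
  have x1 : 0 < r + l := by linarith
  have x2 : 0 < b - l := by linarith
  have a1 := kK_anti x1 hη h
  have a2 := kK_anti x2 hη h
  have p1 := kK_pos 1 x1 (hη.trans h)
  have p2 := kK_pos 1 x2 (hη.trans h)
  unfold kG
  simp only
  have : b * r * kK 1 (r + l) η' < b * r * kK 1 (r + l) η := by gcongr
  have h0 : 0 < b * r * kK 1 (r + l) η := by have := p1.trans a1; positivity
  exact mul_lt_mul this a2.le p2 h0.le

lemma kG_contDiffAt {b r l η : ℝ} (h1 : -r < l) (h2 : l < b) (hη : 0 < η) :
    ContDiffAt ℝ (⊤ : ℕ∞) (kG b r) (l, η) := by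
  have c1 : ContDiffAt ℝ (⊤ : ℕ∞) (fun q : ℝ × ℝ => kK 1 (r + q.1) q.2) (l, η) :=
    ContDiffAt.comp (l, η) (kK_contDiffAt 1 (p := (r + l, η)) (by simp; linarith) hη)
      (f := fun q : ℝ × ℝ => (r + q.1, q.2)) (by fun_prop)
  have c2 : ContDiffAt ℝ (⊤ : ℕ∞) (fun q : ℝ × ℝ => kK 1 (b - q.1) q.2) (l, η) :=
    ContDiffAt.comp (l, η) (kK_contDiffAt 1 (p := (b - l, η)) (by simp; linarith) hη)
      (f := fun q : ℝ × ℝ => (b - q.1, q.2)) (by fun_prop)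
  exact (contDiffAt_const.mul c1).mul c2

lemma phi_contDiffAt {b r : ℝ} (hb : 0 < b) (hr : 0 < r) {φ : ℝ → ℝ}
    (hφ : ∀ l ∈ Set.Ioo 0 b, 0 < φ l ∧ kG b r (l, φ l) = 1) {l : ℝ} (hl : l ∈ Set.Ioo 0 b) :
    ContDiffAt ℝ (⊤ : ℕ∞) φ l := by
  obtain ⟨hp, h1⟩ := hφ l hl
  have hl0 := hl.1
  have hlb := hl.2
  have x1 : 0 < r + l := by linarith
  have x2 : 0 < b - l := by linarith
  have cd := kG_contDiffAt (b := b) (r := r) (by linarith) hlb hp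
  set c := fderiv ℝ (kG b r) (l, φ l) (0, 1) with hc
  have hcv : c = -(b * r * (kK 0 (r + l) (φ l) * kK 1 (b - l) (φ l) +
      kK 1 (r + l) (φ l) * kK 0 (b - l) (φ l))) := by
    have hd : HasDerivAt (fun s : ℝ => kG b r (l, s)) c (φ l) := by
      have h := (cd.differentiableAt (by simp)).hasFDerivAt
      exact h.comp_hasDerivAt (φ l) ((hasDerivAt_const (φ l) l).prodMk (hasDerivAt_id (φ l)))
    have k1 := kK_hasDerivAt 1 (hasDerivAt_const (φ l) (r + l)) (hasDerivAt_id (φ l)) x1 hp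
    have k2 := kK_hasDerivAt 1 (hasDerivAt_const (φ l) (b - l)) (hasDerivAt_id (φ l)) x2 hp
    have hd2 : HasDerivAt (fun s : ℝ => kG b r (l, s)) _ (φ l) := (k1.const_mul (b * r)).mul k2
    rw [hd.unique hd2]
    simp
    ring
  have hc0 : c ≠ 0 := by
    have q1 := kK_pos 0 x1 hp
    have q2 := kK_pos 1 x1 hp
    have q3 := kK_pos 0 x2 hp
    have q4 := kK_pos 1 x2 hp
    rw [hcv]
    exact neg_ne_zero.2 (by positivity)
  have hinv : (fderiv ℝ (kG b r) (l, φ l) ∘L .inr ℝ ℝ ℝ).IsInvertible := by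
    refine ⟨ContinuousLinearEquiv.unitsEquivAut ℝ (Units.mk0 c hc0), ?_⟩
    ext
    simp [hc]
  have hn : ((⊤ : ℕ∞) : WithTop ℕ∞) ≠ 0 := by simp
  have hψ := cd.contDiffAt_implicitFunction hn hinv
  have hev := cd.eventually_apply_implicitFunction hn hinv
  have hself := cd.implicitFunction_apply_self hn hinv
  set ψ := cd.implicitFunction hn hinv with hψd
  simp only at hψ hev hself
  refine hψ.congr_of_eventuallyEq ?_
  have hpos : ∀ᶠ x in nhds l, 0 < ψ x :=
    hψ.continuousAt.eventually (Ioi_mem_nhds (by rw [hself]; exact hp))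
  filter_upwards [hev, hpos, Ioo_mem_nhds hl0 hlb] with x e1 e2 e3
  obtain ⟨f1, f2⟩ := hφ x e3
  rw [h1] at e1
  have hx1 : -r < x := by have := e3.1; linarith
  rcases lt_trichotomy (φ x) (ψ x) with h | h | h
  · have := kG_anti hb hr hx1 e3.2 f1 h
    linarith
  · exact h
  · have := kG_anti hb hr hx1 e3.2 e2 h
    linarith

lemma deriv_smooth {φ : ℝ → ℝ} {l : ℝ} (h : ContDiffAt ℝ (⊤ : ℕ∞) φ l) :
    ContDiffAt ℝ (⊤ : ℕ∞) (deriv φ) l :=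
  (h.fderiv_right (m := (⊤ : ℕ∞)) (by simp)).clm_apply contDiffAt_const

lemma phi_second {b r : ℝ} (hb : 0 < b) (hr : 0 < r) {φ : ℝ → ℝ}
    (hφ : ∀ l ∈ Set.Ioo 0 b, 0 < φ l ∧ kG b r (l, φ l) = 1) {l : ℝ} (hl : l ∈ Set.Ioo 0 b) :
    0 < deriv (deriv φ) l := by
  have hcd := fun y (hy : y ∈ Set.Ioo 0 b) => phi_contDiffAt hb hr hφ hy
  have hd : ∀ y ∈ Set.Ioo 0 b, HasDerivAt φ (deriv φ y) y := fun y hy =>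
    ((hcd y hy).differentiableAt (by simp)).hasDerivAt
  have hU : Set.Ioo 0 b ∈ nhds l := Ioo_mem_nhds hl.1 hl.2
  have hdd : HasDerivAt (deriv φ) (deriv (deriv φ) l) l := by
    exact ((deriv_smooth (hcd l hl)).differentiableAt (by simp)).hasDerivAt
  -- derivatives of the moments along the curve
  have dc : ∀ n : ℤ, ∀ y ∈ Set.Ioo 0 b, HasDerivAt (fun s => kK n (r + s) (φ s))
      (-(kK (n + 2) (r + y) (φ y) / 2) - kK (n - 1) (r + y) (φ y) * deriv φ y) y := by
    intro n y hy
    have := hy.1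
    refine (kK_hasDerivAt n ((hasDerivAt_id y).const_add r) (hd y hy) (by simp; linarith)
      (hφ y hy).1).congr_deriv ?_
    simp
  have de : ∀ n : ℤ, ∀ y ∈ Set.Ioo 0 b, HasDerivAt (fun s => kK n (b - s) (φ s))
      (kK (n + 2) (b - y) (φ y) / 2 - kK (n - 1) (b - y) (φ y) * deriv φ y) y := by
    intro n y hy
    have := hy.2
    refine (kK_hasDerivAt n ((hasDerivAt_id y).const_sub b) (hd y hy) (by simp; linarith)
      (hφ y hy).1).congr_deriv ?_
    simp
  have first : ∀ y ∈ Set.Ioo 0 b,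
      (-(kK 3 (r + y) (φ y) / 2) - kK 0 (r + y) (φ y) * deriv φ y) * kK 1 (b - y) (φ y) +
      kK 1 (r + y) (φ y) * (kK 3 (b - y) (φ y) / 2 - kK 0 (b - y) (φ y) * deriv φ y) = 0 := by
    intro y hy
    have h1 := (dc 1 y hy).mul (de 1 y hy)
    have h2 : HasDerivAt (fun s => kK 1 (r + s) (φ s) * kK 1 (b - s) (φ s)) 0 y := by
      refine (hasDerivAt_const y (1 / (b * r))).congr_of_eventuallyEq ?_
      filter_upwards [Ioo_mem_nhds hy.1 hy.2] with s hs
      have := (hφ s hs).2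
      unfold kG at this
      simp only at this
      field_simp
      linarith
    have := h1.unique h2
    norm_num at this
    exact this
  have F := first l hl
  have second := ((((dc 3 l hl).div_const 2).neg.sub ((dc 0 l hl).mul hdd)).mul (de 1 l hl)).add
    ((dc 1 l hl).mul (((de 3 l hl).div_const 2).sub ((de 0 l hl).mul hdd)))
  have s2 := second.unique (f := _) ((hasDerivAt_const l (0:ℝ)).congr_of_eventuallyEq (by
    filter_upwards [hU] with s hs
    exact first s hs))
  norm_num at s2
  have hp := (hφ l hl).1
  have x1 : 0 < r + l := by linarith [hl.1]
  have x2 : 0 < b - l := by linarith [hl.2]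
  have C1 := kK_cs x1 hp (a := 1) (by norm_num) (deriv φ l)
  have C2 := kK_cs x2 hp (a := -1) (by norm_num) (deriv φ l)
  have p1 := kK_pos 1 x1 hp
  have p2 := kK_pos 1 x2 hp
  have p3 := kK_pos 0 x1 hp
  have p4 := kK_pos 0 x2 hp
  generalize deriv (deriv φ) l = q at *
  generalize deriv φ l = p at *
  generalize kK 0 (r + l) (φ l) = c0 at *
  generalize kK 1 (r + l) (φ l) = c1 at *
  generalize kK 2 (r + l) (φ l) = c2 at *
  generalize kK 3 (r + l) (φ l) = c3 at *
  generalize kK 5 (r + l) (φ l) = c5 at *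
  generalize kK (-1) (r + l) (φ l) = c6 at *
  generalize kK 0 (b - l) (φ l) = d0 at *
  generalize kK 1 (b - l) (φ l) = d1 at *
  generalize kK 2 (b - l) (φ l) = d2 at *
  generalize kK 3 (b - l) (φ l) = d3 at *
  generalize kK 5 (b - l) (φ l) = d5 at *
  generalize kK (-1) (b - l) (φ l) = d6 at *
  clear second first dc de
  obtain ⟨X, hX⟩ : ∃ X, X = c3 / 2 + p * c0 := ⟨_, rfl⟩
  obtain ⟨Y, hY⟩ : ∃ Y, Y = -d3 / 2 + p * d0 := ⟨_, rfl⟩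
  obtain ⟨A, hA⟩ : ∃ A, A = c5 / 4 + p * c2 + p ^ 2 * c6 := ⟨_, rfl⟩
  obtain ⟨B, hB⟩ : ∃ B, B = d5 / 4 - p * d2 + p ^ 2 * d6 := ⟨_, rfl⟩
  have C1' : X ^ 2 < c1 * A := by rw [hX, hA]; convert C1 using 2 <;> ring
  have C2' : Y ^ 2 < d1 * B := by rw [hY, hB]; convert C2 using 2 <;> ring
  have F' : X * d1 + c1 * Y = 0 := by rw [hX, hY]; linarith
  have S' : A * d1 + 2 * X * Y + c1 * B = q * (c0 * d1 + c1 * d0) := by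
    rw [hX, hY, hA, hB]; linarith
  have h7 : 0 < c1 * d1 * (q * (c0 * d1 + c1 * d0)) := by
    rw [← S']
    have e1 := mul_lt_mul_of_pos_right C1' (show 0 < d1 ^ 2 by positivity)
    have e2 := mul_lt_mul_of_pos_right C2' (show 0 < c1 ^ 2 by positivity)
    have e3 : (X * d1 + c1 * Y) ^ 2 = 0 := by rw [F']; ring
    nlinarith
  have h8 : 0 < c1 * d1 * (c0 * d1 + c1 * d0) := by positivity
  by_contra hq
  push Not at hq
  nlinarith

lemma kK_large {M R : ℝ} (hM : 0 ≤ M) (hR : 0 < R) :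
    ∃ δ > 0, ∀ x, 0 < x → x < δ → R < kK 1 x M := by
  set m := M * √(Real.pi * 2) / 2 with hm
  have hm0 : 0 ≤ m := by positivity
  refine ⟨((1 + m + R) ^ 2)⁻¹, by positivity, fun x hx hxδ => ?_⟩
  refine lt_of_lt_of_le ?_ (kK_one_ge hx hM)
  rw [kK_zero_zero]
  obtain ⟨u, hu⟩ : ∃ u, u = √(1 / x) := ⟨_, rfl⟩
  have hu2 : u ^ 2 = 1 / x := by rw [hu, Real.sq_sqrt (by positivity)]
  have hs : √(Real.pi / (x / 2)) = √(Real.pi * 2) * u := by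
    rw [hu, ← Real.sqrt_mul (by positivity)]; congr 1; field_simp
  have hlt : 1 + m + R < u := by
    have : (1 + m + R) ^ 2 < u ^ 2 := by
      rw [hu2, one_div]
      exact (lt_inv_comm₀ (by positivity) hx).2 hxδ
    exact lt_of_pow_lt_pow_left₀ 2 (by rw [hu]; positivity) this
  rw [hs, ← hu2]
  have : M * (√(Real.pi * 2) * u / 2) = m * u := by rw [hm]; ring
  rw [this]
  nlinarith

lemma phi_large {b r : ℝ} (hb : 0 < b) (hr : 0 < r) {φ : ℝ → ℝ}
    (hφ : ∀ l ∈ Set.Ioo 0 b, 0 < φ l ∧ kG b r (l, φ l) = 1) {M : ℝ} (hM : 0 < M) :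
    ∃ c, 0 < c ∧ c < b ∧ ∀ l, c < l → l < b → M < φ l := by
  have hm : 0 < kK 1 (r + b) M := kK_pos 1 (by linarith) hM
  obtain ⟨δ, hδ, h⟩ := kK_large hM.le (R := 1 / (b * r * kK 1 (r + b) M)) (by positivity)
  refine ⟨max (b / 2) (b - δ), by positivity, by simp; constructor <;> linarith,
    fun l h1 h2 => ?_⟩
  rw [max_lt_iff] at h1
  have h3 := h (b - l) (by linarith) (by linarith)
  have hl : l ∈ Set.Ioo 0 b := ⟨by linarith, h2⟩
  have hmono : kK 1 (r + b) M ≤ kK 1 (r + l) M :=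
    setIntegral_mono_on (kE_int 1 (by linarith) hM) (kE_int 1 (by linarith [hl.1]) hM)
      measurableSet_Ioi fun v hv => kE_mono 1 (by linarith) le_rfl hv
  have hG : 1 < kG b r (l, M) := by
    unfold kG
    simp only
    rw [div_lt_iff₀ (by positivity)] at h3
    have hp : 0 < kK 1 (b - l) M := kK_pos 1 (by linarith) hM
    calc 1 < kK 1 (b - l) M * (b * r * kK 1 (r + b) M) := h3
      _ = b * r * kK 1 (r + b) M * kK 1 (b - l) M := by ring
      _ ≤ _ := by gcongr
  by_contra hcon
  push Not at hcon
  obtain ⟨f1, f2⟩ := hφ l hl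
  rcases hcon.eq_or_lt with e | e
  · rw [e] at f2; linarith
  · have := kG_anti hb hr (by linarith [hl.1]) h2 f1 e
    linarith

lemma phi_small {b r j : ℝ} (hb : 0 < b) (hr : 0 < r) {φ : ℝ → ℝ} (hj0 : 0 < j)
    (hφ : ∀ l ∈ Set.Ioo 0 b, 0 < φ l ∧ kG b r (l, φ l) = 1)
    (hj : (√(Real.pi * b / 2) + √(Real.pi * r / 2))⁻¹ * (1 / b - 1 / r) < j) :
    ∃ l ∈ Set.Ioo 0 b, φ l < l * j := by
  have hk : ∀ x : ℝ, 0 < x → x * kK 0 x 0 = √(Real.pi * x / 2) := by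
    intro x hx
    rw [kK_zero_zero, eq_comm, Real.sqrt_eq_iff_eq_sq (by positivity) (by positivity), mul_pow,
      div_pow, Real.sq_sqrt (by positivity)]
    field_simp
  have hlim : Filter.Tendsto (fun l : ℝ => l) (nhdsWithin 0 (Set.Ioi 0)) (nhds 0) :=
    nhdsWithin_le_nhds
  have hηlim : Filter.Tendsto (fun l : ℝ => l * j) (nhdsWithin 0 (Set.Ioi 0)) (nhds 0) := by
    simpa using hlim.mul_const j
  have hη0 : ∀ᶠ l in nhdsWithin (0:ℝ) (Set.Ioi 0), 0 ≤ l * j := by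
    filter_upwards [self_mem_nhdsWithin] with l hl
    have : 0 < l := hl
    positivity
  have hxr : Filter.Tendsto (fun l : ℝ => r + l) (nhdsWithin 0 (Set.Ioi 0)) (nhds r) := by
    simpa using hlim.const_add r
  have hxb : Filter.Tendsto (fun l : ℝ => b - l) (nhdsWithin 0 (Set.Ioi 0)) (nhds b) := by
    simpa using hlim.const_sub b
  have k1 := kK_zero_tendsto hr hxr hηlim hη0
  have k2 := kK_zero_tendsto hb hxb hηlim hη0
  have P := ((hxr.const_mul r).inv₀ (by positivity)).add (k1.const_mul j)
  have Q := (((hxb.const_mul b).inv₀ (by positivity)).neg).add (k2.const_mul j)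
  have W := ((P.div_const b).add (Q.div_const r)).sub (hlim.mul (P.mul Q))
  have hW : 0 < ((r * r)⁻¹ + j * kK 0 r 0) / b + (-(b * b)⁻¹ + j * kK 0 b 0) / r -
      0 * (((r * r)⁻¹ + j * kK 0 r 0) * (-(b * b)⁻¹ + j * kK 0 b 0)) := by
    have e : ((r * r)⁻¹ + j * kK 0 r 0) / b + (-(b * b)⁻¹ + j * kK 0 b 0) / r -
      0 * (((r * r)⁻¹ + j * kK 0 r 0) * (-(b * b)⁻¹ + j * kK 0 b 0)) =
      (1 / (b * r)) * (j * (b * kK 0 b 0 + r * kK 0 r 0) - (1 / b - 1 / r)) := by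
      field_simp; ring
    rw [e, hk b hb, hk r hr]
    have hs : 0 < √(Real.pi * b / 2) + √(Real.pi * r / 2) := by positivity
    rw [inv_mul_lt_iff₀ hs] at hj
    apply mul_pos (by positivity)
    linarith
  have hev := W.eventually (Ioi_mem_nhds hW)
  obtain ⟨l, h1, h2, h3⟩ := (hev.and (Filter.eventually_and.2
    ⟨(self_mem_nhdsWithin : Set.Ioi (0:ℝ) ∈ nhdsWithin 0 (Set.Ioi 0)),
      nhdsWithin_le_nhds (Iio_mem_nhds hb)⟩)).exists
  have hl0 : 0 < l := h2
  have hlb : l < b := h3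
  have hη : 0 < l * j := by positivity
  refine ⟨l, ⟨hl0, hlb⟩, ?_⟩
  have x1 : 0 < r + l := by linarith
  have x2 : 0 < b - l := by linarith
  have u1 := kK_one_le x1 hη.le
  have u2 := kK_one_le x2 hη.le
  have p1 := kK_pos 1 x1 hη
  have p2 := kK_pos 1 x2 hη
  have hG : kG b r (l, l * j) < 1 := by
    unfold kG
    simp only
    have h1 : 0 < ((r * (r + l))⁻¹ + j * kK 0 (r + l) (l * j)) / b +
        (-(b * (b - l))⁻¹ + j * kK 0 (b - l) (l * j)) / r -
        l * (((r * (r + l))⁻¹ + j * kK 0 (r + l) (l * j)) *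
          (-(b * (b - l))⁻¹ + j * kK 0 (b - l) (l * j))) := h1
    generalize kK 0 (r + l) (l * j) = k at *
    generalize kK 0 (b - l) (l * j) = m at *
    have hmul := mul_le_mul u1 u2 p2.le (p1.le.trans u1)
    have eA : 1 / (r + l) - l * j * k = 1 / r - l * ((r * (r + l))⁻¹ + j * k) := by
      field_simp; ring
    have eB : 1 / (b - l) - l * j * m = 1 / b - l * (-(b * (b - l))⁻¹ + j * m) := by
      field_simp; ring
    rw [eA, eB] at hmul
    generalize (r * (r + l))⁻¹ + j * k = P' at *
    generalize -(b * (b - l))⁻¹ + j * m = Q' at *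
    have e : (1 / r - l * P') * (1 / b - l * Q') = 1 / (b * r) - l * (P' / b + Q' / r - l * (P' * Q')) := by
      field_simp; ring
    rw [e] at hmul
    have : 0 < l * (P' / b + Q' / r - l * (P' * Q')) := mul_pos hl0 h1
    have hbr : 0 < b * r := by positivity
    have h5 : kK 1 (r + l) (l * j) * kK 1 (b - l) (l * j) < 1 / (b * r) := by linarith
    rw [lt_div_iff₀ hbr] at h5
    linarith
  by_contra hcon
  push Not at hcon
  obtain ⟨f1, f2⟩ := hφ l ⟨hl0, hlb⟩
  rcases hcon.eq_or_lt with e | e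
  · rw [e] at hG; linarith
  · have := kG_anti hb hr (by linarith) hlb hη e
    linarith

/-- Legendre duality: existence of the maximizer -/
lemma exists_max {b j : ℝ} (hb : 0 < b) {φ : ℝ → ℝ} (hj0 : 0 < j)
    (hpos : ∀ l ∈ Set.Ioo 0 b, 0 < φ l)
    (hcd : ∀ l ∈ Set.Ioo 0 b, ContDiffAt ℝ (⊤ : ℕ∞) φ l)
    (hlarge : ∀ M > 0, ∃ c, 0 < c ∧ c < b ∧ ∀ l, c < l → l < b → M < φ l)
    (hsmall : ∃ l ∈ Set.Ioo 0 b, φ l < l * j) :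
    ∃ l ∈ Set.Ioo 0 b, deriv φ l = j ∧ 0 < l * j - φ l ∧
      ∀ y ∈ Set.Ioo 0 b, y * j - φ y ≤ l * j - φ l := by
  obtain ⟨l0, hl0, h0⟩ := hsmall
  obtain ⟨c, hc0, hcb, hc⟩ := hlarge (b * j) (by positivity)
  set v := l0 * j - φ l0 with hv
  have hv0 : 0 < v := by linarith
  have hlc : l0 ≤ c := by
    by_contra hcon
    push Not at hcon
    have h1 := hc l0 hcon hl0.2
    have : l0 * j < b * j := by have := hl0.2; gcongr
    linarith
  have hdl : v / j ≤ l0 := by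
    rw [div_le_iff₀ hj0]; linarith [hpos l0 hl0]
  have hd0 : 0 < v / j := by positivity
  have hsub : Set.Icc (v / j) c ⊆ Set.Ioo 0 b := fun y hy =>
    ⟨hd0.trans_le hy.1, hy.2.trans_lt hcb⟩
  have hcont : ContinuousOn (fun y => y * j - φ y) (Set.Icc (v / j) c) := by
    intro y hy
    have := (hcd y (hsub hy)).continuousAt
    apply ContinuousAt.continuousWithinAt
    fun_prop
  obtain ⟨l, hl, hmax⟩ := isCompact_Icc.exists_isMaxOn ⟨l0, hdl, hlc⟩ hcont
  have hlv : v ≤ l * j - φ l := hmax (a := l0) ⟨hdl, hlc⟩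
  have hall : ∀ y ∈ Set.Ioo 0 b, y * j - φ y ≤ l * j - φ l := by
    intro y hy
    have hy2 := hy.2
    by_cases h1 : y < v / j
    · rw [lt_div_iff₀ hj0] at h1
      linarith [hpos y hy]
    by_cases h2 : c < y
    · have h3 := hc y h2 hy2
      have : y * j < b * j := by gcongr
      linarith
    · exact hmax (a := y) ⟨by linarith, by linarith⟩
  refine ⟨l, hsub hl, ?_, by linarith, hall⟩
  have hloc : IsLocalMax (fun y => y * j - φ y) l := by
    filter_upwards [Ioo_mem_nhds (hsub hl).1 (hsub hl).2] with y hy using hall y hy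
  have hd := ((hasDerivAt_id l).mul_const j).sub
    ((hcd l (hsub hl)).differentiableAt (by simp)).hasDerivAt
  have := hloc.hasDerivAt_eq_zero hd
  linarith

lemma legendre_main {b J : ℝ} (hb : 0 < b) (hJ : 0 ≤ J) {φ I : ℝ → ℝ}
    (hpos : ∀ l ∈ Set.Ioo 0 b, 0 < φ l)
    (hcd : ∀ l ∈ Set.Ioo 0 b, ContDiffAt ℝ (⊤ : ℕ∞) φ l)
    (hdd : ∀ l ∈ Set.Ioo 0 b, 0 < deriv (deriv φ) l)
    (hlarge : ∀ M > 0, ∃ c, 0 < c ∧ c < b ∧ ∀ l, c < l → l < b → M < φ l)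
    (hsmall : ∀ j, J < j → ∃ l ∈ Set.Ioo 0 b, φ l < l * j)
    (hI1 : ∀ j, ∀ l ∈ Set.Ioo 0 b, l * j - φ l ≤ I j)
    (hI2 : ∀ j c, J < j → 0 ≤ c → (∀ l ∈ Set.Ioo 0 b, l * j - φ l ≤ c) → I j ≤ c) :
    ContDiffOn ℝ (⊤ : ℕ∞) I (Set.Ioi J) ∧ StrictConvexOn ℝ (Set.Ioi J) I := by
  have hex : ∀ j, J < j → ∃ l, l ∈ Set.Ioo 0 b ∧ deriv φ l = j ∧ I j = l * j - φ l := by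
    intro j hj
    obtain ⟨l, h1, h2, h3, h4⟩ := exists_max hb (hJ.trans_lt hj) hpos hcd hlarge (hsmall j hj)
    exact ⟨l, h1, h2, le_antisymm (hI2 j _ hj h3.le h4) (hI1 j l h1)⟩
  have hmono : StrictMonoOn (deriv φ) (Set.Ioo 0 b) := by
    refine strictMonoOn_of_deriv_pos (convex_Ioo 0 b)
      (fun y hy => (deriv_smooth (hcd y hy)).continuousAt.continuousWithinAt) ?_
    rw [interior_Ioo]
    exact hdd
  -- a point achieving the value is a critical point
  have hcrit : ∀ j, ∀ l ∈ Set.Ioo 0 b, I j = l * j - φ l → deriv φ l = j := by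
    intro j l hl he
    have hloc : IsLocalMax (fun y => y * j - φ y) l := by
      filter_upwards [Ioo_mem_nhds hl.1 hl.2] with y hy
      rw [← he]; exact hI1 j y hy
    have hd := ((hasDerivAt_id l).mul_const j).sub
      ((hcd l hl).differentiableAt (by simp)).hasDerivAt
    have := hloc.hasDerivAt_eq_zero hd
    linarith
  constructor
  · intro j hj
    obtain ⟨l, hl, hlj, hIj⟩ := hex j hj
    apply ContDiffAt.contDiffWithinAt
    have hD := deriv_smooth (hcd l hl)
    have hn : ((⊤ : ℕ∞) : WithTop ℕ∞) ≠ 0 := by simp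
    have hda : HasDerivAt (deriv φ) (deriv (deriv φ) l) l := (hD.differentiableAt hn).hasDerivAt
    have hfd : HasFDerivAt (deriv φ) ((ContinuousLinearEquiv.unitsEquivAut ℝ
        (Units.mk0 _ (hdd l hl).ne') : ℝ ≃L[ℝ] ℝ) : ℝ →L[ℝ] ℝ) l := by
      refine hda.hasFDerivAt.congr_fderiv ?_
      ext; simp
    have hψ := hD.to_localInverse hfd hn
    have hself := hD.localInverse_apply_image hfd hn
    have hright := (hD.hasStrictFDerivAt' hfd hn).eventually_right_inverse
    change ∀ᶠ y in nhds (deriv φ l), deriv φ (hD.localInverse hfd hn y) = y at hright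
    set ψ := hD.localInverse hfd hn with hψd
    rw [hlj] at hψ hself hright
    have hmem : ∀ᶠ y in nhds j, ψ y ∈ Set.Ioo 0 b :=
      hψ.continuousAt.eventually (by rw [hself]; exact Ioo_mem_nhds hl.1 hl.2)
    have hsm : ContDiffAt ℝ (⊤ : ℕ∞) (fun y => ψ y * y - φ (ψ y)) j := by
      refine (hψ.mul contDiffAt_id).sub (ContDiffAt.comp j ?_ hψ)
      rw [hself]; exact hcd l hl
    refine hsm.congr_of_eventuallyEq ?_
    filter_upwards [hmem, hright, Ioi_mem_nhds hj] with y h1 h2 h3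
    obtain ⟨m, hm, hmj, hIm⟩ := hex y h3
    have : ψ y = m := hmono.injOn h1 hm (by rw [h2, hmj])
    rw [hIm, this]
  · refine ⟨convex_Ioi J, ?_⟩
    intro x hx y hy hxy a c ha hc hac
    simp only [smul_eq_mul]
    have hz : J < a * x + c * y := (convex_Ioi J) hx hy ha.le hc.le hac
    obtain ⟨l, hl, hlj, hIz⟩ := hex _ hz
    have hlt : ∀ w, w ≠ a * x + c * y → l * w - φ l < I w := by
      intro w hw
      refine lt_of_le_of_ne (hI1 w l hl) fun h => hw ?_
      rw [← hlj, hcrit w l hl h.symm]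
    have e1 := hlt x (fun h => hxy (by
      have : c * x = c * y := by have : x = (a + c) * x := by rw [hac]; ring
                                 linarith
      exact mul_left_cancel₀ hc.ne' this))
    have e2 := hlt y (fun h => hxy (by
      have : a * x = a * y := by have : y = (a + c) * y := by rw [hac]; ring
                                 linarith
      exact mul_left_cancel₀ ha.ne' this))
    rw [hIz]
    have f1 := mul_lt_mul_of_pos_left e1 ha
    have f2 := mul_lt_mul_of_pos_left e2 hc
    have : l * (a * x + c * y) - φ l = a * (l * x - φ l) + c * (l * y - φ l) := by
      have : φ l = (a + c) * φ l := by rw [hac]; ring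
      linarith
    linarith

lemma Fcal_eq (b r l η : ℝ) : Fcal b r l η = kG b r (l, η) := by
  simp [Fcal, kG, Ccal_eq]

lemma Fcal_uniq {b r l η η' : ℝ} (hb : 0 < b) (hr : 0 < r) (h1 : -r < l) (h2 : l < b) (hη : 0 < η)
    (hη' : 0 < η') (h : Fcal b r l η = 1) (h' : Fcal b r l η' = 1) : η = η' := by
  rw [Fcal_eq] at h h'
  rcases lt_trichotomy η η' with e | e | e
  · have := kG_anti hb hr h1 h2 hη e
    linarith
  · exact e
  · have := kG_anti hb hr h1 h2 hη' e
    linarith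

lemma Fcal_symm (b r l η : ℝ) : Fcal b r (b - r - l) η = Fcal b r l η := by
  unfold Fcal
  rw [show r + (b - r - l) = b - l by ring, show b - (b - r - l) = r + l by ring]
  ring

/-- The Legendre transform `I` of the cumulant generating function is nonnegative, convex
and finite on all of `ℝ`, and is infinitely differentiable and strictly convex outside
`[−j*, j*]`, where `j* = κ(T_L − T_R)`. -/
theorem legendre_cgf_regularity
    (βL βR TL TR κ jstar : ℝ) (hβL : 0 < βL) (hLR : βL ≤ βR)
    (hTL : TL = 1 / βL) (hTR : TR = 1 / βR)
    (hκ : κ = (Real.sqrt (Real.pi * βL / 2) + Real.sqrt (Real.pi * βR / 2))⁻¹)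
    (hjstar : jstar = κ * (TL - TR))
    (f : ℝ → EReal) (hf : IsCGF βL βR f) :
    ∃ I : ℝ → ℝ,
      (∀ j : ℝ, legendre f j = ((I j : ℝ) : EReal)) ∧
      (∀ j : ℝ, 0 ≤ I j) ∧
      ConvexOn ℝ Set.univ I ∧
      ContDiffOn ℝ (⊤ : ℕ∞) I (Set.Icc (-jstar) jstar)ᶜ ∧
      StrictConvexOn ℝ (Set.Iio (-jstar)) I ∧
      StrictConvexOn ℝ (Set.Ioi jstar) I := by
  have hβR : 0 < βR := hβL.trans_le hLR
  obtain ⟨hf0, hf1, hf2⟩ := hf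
  rw [Set.uIcc_of_le (by linarith)] at hf0 hf1
  set g : ℝ → ℝ := fun l => (f l).toReal with hg
  have hJ : 0 ≤ jstar := by
    rw [hjstar, hκ, hTL, hTR]
    have : 1 / βR ≤ 1 / βL := one_div_le_one_div_of_le hβL hLR
    apply mul_nonneg (by positivity)
    linarith
  -- real valued description
  have hg0 : ∀ l ∈ Set.Icc (βL - βR) 0, g l = 0 := fun l hl => by simp [hg, hf0 l hl]
  have hg1 : ∀ l ∈ Set.Ioo (-βR) βL \ Set.Icc (βL - βR) 0, 0 < g l ∧ Fcal βL βR l (g l) = 1 := by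
    intro l hl
    obtain ⟨η, h1, h2, h3⟩ := hf1 l hl
    have : g l = η := by simp [hg, h3]
    rw [this]; exact ⟨h1, h2⟩
  have hfg : ∀ l ∈ Set.Ioo (-βR) βL, f l = ((g l : ℝ) : EReal) := by
    intro l hl
    by_cases h : l ∈ Set.Icc (βL - βR) 0
    · rw [hg0 l h, hf0 l h]; rfl
    · obtain ⟨η, h1, h2, h3⟩ := hf1 l ⟨hl, h⟩
      simp [hg, h3]
  have hgnn : ∀ l ∈ Set.Ioo (-βR) βL, 0 ≤ g l := by
    intro l hl
    by_cases h : l ∈ Set.Icc (βL - βR) 0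
    · exact (hg0 l h).ge
    · exact (hg1 l ⟨hl, h⟩).1.le
  have hleg : ∀ j c : ℝ, legendre f j ≤ (c : EReal) ↔
      ∀ l ∈ Set.Ioo (-βR) βL, l * j - g l ≤ c := by
    intro j c
    unfold legendre
    rw [iSup_le_iff]
    refine forall_congr' fun l => ?_
    by_cases hl : l ∈ Set.Ioo (-βR) βL
    · rw [hfg l hl, ← EReal.coe_sub, EReal.coe_le_coe_iff]
      exact ⟨fun h _ => h, fun h => h hl⟩
    · rw [hf2 l hl]
      simp [hl]
  have h0mem : (0 : ℝ) ∈ Set.Ioo (-βR) βL := ⟨by linarith, hβL⟩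
  have hnn : ∀ j : ℝ, 0 ≤ legendre f j := by
    intro j
    unfold legendre
    refine le_trans ?_ (le_iSup _ (0 : ℝ))
    rw [hf0 0 ⟨by linarith, le_rfl⟩]
    simp
  have hub : ∀ j : ℝ, legendre f j ≤ (((βL + βR) * |j| : ℝ) : EReal) := by
    intro j
    rw [hleg]
    intro l hl
    have h1 : |l| ≤ βL + βR := abs_le.2 ⟨by linarith [hl.1], by linarith [hl.2]⟩
    have h2 : l * j ≤ |l| * |j| := by rw [← abs_mul]; exact le_abs_self _
    have h3 : |l| * |j| ≤ (βL + βR) * |j| := by gcongr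
    linarith [hgnn l hl]
  have hcoe : ∀ j : ℝ, legendre f j = (((legendre f j).toReal : ℝ) : EReal) := by
    intro j
    refine (EReal.coe_toReal ?_ ?_).symm
    · exact ne_top_of_le_ne_top (EReal.coe_ne_top _) (hub j)
    · exact ne_bot_of_le_ne_bot (by simp) (hnn j)
  obtain ⟨I, hI⟩ : ∃ I : ℝ → ℝ, ∀ j, legendre f j = ((I j : ℝ) : EReal) := ⟨_, hcoe⟩
  have hIle : ∀ j c : ℝ, I j ≤ c ↔ ∀ l ∈ Set.Ioo (-βR) βL, l * j - g l ≤ c := by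
    intro j c
    rw [← hleg, hI, EReal.coe_le_coe_iff]
  have hIge : ∀ j, ∀ l ∈ Set.Ioo (-βR) βL, l * j - g l ≤ I j := fun j => (hIle j (I j)).1 le_rfl
  have hInn : ∀ j, 0 ≤ I j := by
    intro j
    have := hnn j
    rw [hI] at this
    exact_mod_cast this
  have hgs : ∀ l ∈ Set.Ioo (-βR) βL, g (βL - βR - l) = g l := by
    intro l hl
    have hl' : βL - βR - l ∈ Set.Ioo (-βR) βL := ⟨by linarith [hl.2], by linarith [hl.1]⟩
    by_cases h : l ∈ Set.Icc (βL - βR) 0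
    · rw [hg0 l h, hg0 _ ⟨by linarith [h.2], by linarith [h.1]⟩]
    · have h' : βL - βR - l ∉ Set.Icc (βL - βR) 0 := fun h' =>
        h ⟨by linarith [h'.2], by linarith [h'.1]⟩
      obtain ⟨p1, e1⟩ := hg1 l ⟨hl, h⟩
      obtain ⟨p2, e2⟩ := hg1 _ ⟨hl', h'⟩
      rw [Fcal_symm] at e2
      exact Fcal_uniq hβL hβR hl.1 hl.2 p2 p1 e2 e1
  have hsymle : ∀ j, I (-j) ≤ I j + (βR - βL) * j := by
    intro j
    rw [hIle]
    intro l hl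
    have hl' : βL - βR - l ∈ Set.Ioo (-βR) βL := ⟨by linarith [hl.2], by linarith [hl.1]⟩
    have := hIge j _ hl'
    rw [hgs l hl] at this
    linarith
  have hsym : ∀ j, I (-j) = I j + (βR - βL) * j := by
    intro j
    refine le_antisymm (hsymle j) ?_
    have := hsymle (-j)
    rw [neg_neg] at this
    linarith
  have hφ : ∀ l ∈ Set.Ioo 0 βL, 0 < g l ∧ kG βL βR (l, g l) = 1 := by
    intro l hl
    rw [← Fcal_eq]
    exact hg1 l ⟨⟨by linarith [hl.1], hl.2⟩, fun h => absurd hl.1 (not_lt.2 h.2)⟩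
  obtain ⟨hsm, hsc⟩ := legendre_main (φ := g) (I := I) hβL hJ (fun l hl => (hφ l hl).1)
    (fun l hl => phi_contDiffAt hβL hβR hφ hl) (fun l hl => phi_second hβL hβR hφ hl)
    (fun M hM => phi_large hβL hβR hφ hM)
    (fun j hj => phi_small hβL hβR (hJ.trans_lt hj) hφ (by
      rw [hjstar, hκ, hTL, hTR] at hj; exact hj))
    (fun j l hl => hIge j l ⟨by linarith [hl.1], hl.2⟩)
    (by
      intro j c hj hc h
      rw [hIle]
      intro l hl
      by_cases h0 : 0 < l
      · exact h l ⟨h0, hl.2⟩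
      · push Not at h0
        have : l * j ≤ 0 := mul_nonpos_of_nonpos_of_nonneg h0 (hJ.trans hj.le)
        linarith [hgnn l hl])
  have hneg : ∀ k, I k = I (-k) + (βR - βL) * (-k) := by
    intro k
    have := hsym (-k)
    rwa [neg_neg] at this
  refine ⟨I, hI, hInn, ⟨convex_univ, ?_⟩, ?_, ⟨convex_Iio _, ?_⟩, hsc⟩
  · intro x _ y _ a c ha hc hac
    simp only [smul_eq_mul]
    rw [hIle]
    intro l hl
    have e1 := mul_le_mul_of_nonneg_left (hIge x l hl) ha
    have e2 := mul_le_mul_of_nonneg_left (hIge y l hl) hc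
    have : g l = (a + c) * g l := by rw [hac]; ring
    linarith
  · intro k hk
    apply ContDiffAt.contDiffWithinAt
    by_cases h : jstar < k
    · exact hsm.contDiffAt (Ioi_mem_nhds h)
    · have hk' : jstar < -k := by
        by_contra h2
        exact hk ⟨by linarith, by linarith⟩
      have h1 : ContDiffAt ℝ (⊤ : ℕ∞) (fun x => I (-x)) k :=
        ContDiffAt.comp k (hsm.contDiffAt (Ioi_mem_nhds hk')) contDiffAt_id.neg
      have h2 : ContDiffAt ℝ (⊤ : ℕ∞) (fun x => I (-x) + (βR - βL) * (-x)) k :=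
        h1.add (by fun_prop)
      exact h2.congr_of_eventuallyEq (Filter.Eventually.of_forall hneg)
  · intro x hx y hy hxy a c ha hc hac
    have hx' : -x ∈ Set.Ioi jstar := by simp at hx ⊢; linarith
    have hy' : -y ∈ Set.Ioi jstar := by simp at hy ⊢; linarith
    have := hsc.2 hx' hy' (fun h => hxy (neg_injective h)) ha hc hac
    simp only [smul_eq_mul] at this ⊢
    rw [hneg (a * x + c * y), hneg x, hneg y, show -(a * x + c * y) = a * -x + c * -y by ring]
    linarith
end
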